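/- arXiv:2306.04483 — 4 statements merged into one kernel-verified Lean document; each statement's English description precedes it below -/
import Mathlib

section
/- Let d ≥ 1 and let φ ∈ Φ_d have a strictly positive nonincreasing d-radial spectral density f_d. Let A₁, A₂ be symmetric positive definite real d×d matrices with A₁ ⪰ A₂ (i.e., A₁ − A₂ positive semidefinite), and let b₁, b₂ ≥ 0. Then the function h ↦ b₁ φ(√(hᵀA₁h)) − b₂ φ(√(hᵀA₂h)) is a stationary covariance function on ℝ^d if and only if b₁ ≥ b₂ (det A₁ / det A₂)^{1/2}. -/
open MeasureTheory
open scoped BigOperators RealInnerProductSpace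

noncomputable section

/-- A function `C : ℝ^d → ℝ` is a stationary covariance function if it is
positive semidefinite. -/
def IsStationaryCovariance (d : ℕ) (C : EuclideanSpace ℝ (Fin d) → ℝ) : Prop :=
  ∀ (n : ℕ) (x : Fin n → EuclideanSpace ℝ (Fin d)) (v : Fin n → ℝ),
    0 ≤ ∑ i, ∑ j, v i * v j * C (x i - x j)

/-- `φ : [0,∞) → ℝ` belongs to the class `Φ_d`. -/
def MemPhi (d : ℕ) (φ : ℝ → ℝ) : Prop :=
  ContinuousOn φ (Set.Ici 0) ∧ IsStationaryCovariance d (fun h => φ ‖h‖)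

/-- `f` is a `d`-radial spectral density of `φ`. -/
def IsRadialSpectralDensity (d : ℕ) (φ f : ℝ → ℝ) : Prop :=
  (∀ u : ℝ, 0 ≤ u → 0 ≤ f u) ∧
  MeasureTheory.Integrable (fun ω : EuclideanSpace ℝ (Fin d) => f ‖ω‖) ∧
  ∀ h : EuclideanSpace ℝ (Fin d),
    (φ ‖h‖ : ℂ) = ∫ ω : EuclideanSpace ℝ (Fin d),
      Complex.exp (Complex.I * ((⟪h, ω⟫ : ℝ) : ℂ)) * ((f ‖ω‖ : ℝ) : ℂ)

/-- The quadratic form `hᵀ A h`. -/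
def quadForm {d : ℕ} (A : Matrix (Fin d) (Fin d) ℝ) (h : EuclideanSpace ℝ (Fin d)) : ℝ :=
  ∑ i, ∑ j, h i * A i j * h j



open Filter Topology ProbabilityTheory

lemma aux_matrix {d : ℕ} (A : Matrix (Fin d) (Fin d) ℝ) (hA : A.PosDef) :
    ∃ T S : EuclideanSpace ℝ (Fin d) →ₗ[ℝ] EuclideanSpace ℝ (Fin d),
      (∀ h, quadForm A h = ‖T h‖ ^ 2) ∧ (∀ h ω, ⟪T h, S ω⟫ = ⟪h, ω⟫) ∧
      (∀ u, ∃ h, T h = u) ∧ |LinearMap.det S| = (Real.sqrt A.det)⁻¹ := by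
  obtain ⟨B, hB⟩ : ∃ B : Matrix (Fin d) (Fin d) ℝ, A = B.transpose * B := by
    open scoped MatrixOrder Matrix.Norms.L2Operator in
    obtain ⟨B, hB⟩ := CStarAlgebra.nonneg_iff_eq_star_mul_self.mp hA.posSemidef.nonneg
    exact ⟨B, hB⟩
  have hdet : A.det = B.det ^ 2 := by rw [hB, Matrix.det_mul, Matrix.det_transpose, sq]
  have hB0 : B.det ≠ 0 := by
    intro h
    have := hA.det_pos
    rw [hdet, h] at this
    simp at this
  have hBu : IsUnit B.det := hB0.isUnit
  refine ⟨Matrix.toLpLin 2 2 B, Matrix.toLpLin 2 2 B⁻¹.transpose, ?_, ?_, ?_, ?_⟩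
  · intro h
    rw [← real_inner_self_eq_norm_sq, EuclideanSpace.inner_eq_star_dotProduct]
    simp only [Matrix.toLpLin_apply, star_trivial]
    rw [Matrix.dotProduct_mulVec, Matrix.vecMul_mulVec, ← hB, ← Matrix.dotProduct_mulVec]
    simp only [quadForm, dotProduct, Matrix.mulVec, Finset.mul_sum, mul_assoc]
  · intro h ω
    rw [EuclideanSpace.inner_eq_star_dotProduct, EuclideanSpace.inner_eq_star_dotProduct]
    simp only [Matrix.toLpLin_apply, star_trivial]
    rw [Matrix.mulVec_transpose, ← Matrix.dotProduct_mulVec, Matrix.mulVec_mulVec,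
      Matrix.nonsing_inv_mul _ hBu, Matrix.one_mulVec]
  · intro u
    refine ⟨Matrix.toLpLin 2 2 B⁻¹ u, ?_⟩
    rw [← LinearMap.comp_apply, ← Matrix.toLpLin_mul_same, Matrix.mul_nonsing_inv _ hBu]
    simp
  · rw [LinearMap.det_toLpLin, Matrix.det_transpose, Matrix.det_nonsing_inv, hdet,
      Real.sqrt_sq_eq_abs, Ring.inverse_eq_inv', abs_inv]

section
variable {d : ℕ}

lemma aux_change (φ f : ℝ → ℝ) (hf : IsRadialSpectralDensity d φ f)
    (T S : EuclideanSpace ℝ (Fin d) →ₗ[ℝ] EuclideanSpace ℝ (Fin d))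
    (hTS : ∀ h ω, ⟪T h, S ω⟫ = ⟪h, ω⟫) (hdet : LinearMap.det S ≠ 0) :
    Integrable (fun ω : EuclideanSpace ℝ (Fin d) => f ‖S ω‖) ∧
    ∀ h, φ ‖T h‖ = |LinearMap.det S| *
      ∫ ω : EuclideanSpace ℝ (Fin d), Real.cos ⟪h, ω⟫ * f ‖S ω‖ := by
  obtain ⟨-, hint, hFT⟩ := hf
  have hmap := Measure.map_linearMap_addHaar_eq_smul_addHaar
    (volume : Measure (EuclideanSpace ℝ (Fin d))) hdet
  let e := (LinearMap.equivOfDetNeZero S hdet).toContinuousLinearEquiv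
  have he : ∀ x, e x = S x := fun x => rfl
  have hme : MeasurableEmbedding (S : EuclideanSpace ℝ (Fin d) → EuclideanSpace ℝ (Fin d)) :=
    e.toHomeomorph.measurableEmbedding
  constructor
  · have h1 : Integrable (fun ω : EuclideanSpace ℝ (Fin d) => f ‖ω‖)
        (Measure.map S volume) := by
      rw [hmap]
      exact hint.smul_measure ENNReal.ofReal_ne_top
    exact (hme.integrable_map_iff).1 h1
  · intro h
    have h2 : φ ‖T h‖ = ∫ ω : EuclideanSpace ℝ (Fin d), Real.cos ⟪T h, ω⟫ * f ‖ω‖ := by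
      have h3 := congrArg Complex.re (hFT (T h))
      rw [Complex.ofReal_re] at h3
      rw [h3, ← RCLike.re_eq_complex_re, ← integral_re]
      · refine integral_congr_ae (ae_of_all _ fun ω => ?_)
        simp only [RCLike.re_eq_complex_re, Complex.re_mul_ofReal, mul_comm Complex.I,
          Complex.exp_ofReal_mul_I_re]
      · refine Integrable.bdd_mul (c := 1) hint.ofReal ?_ (ae_of_all _ fun ω => ?_)
        · exact Continuous.aestronglyMeasurable (by fun_prop)
        · rw [mul_comm, Complex.norm_exp_ofReal_mul_I]
    have h4 : ∫ ω : EuclideanSpace ℝ (Fin d), Real.cos ⟪h, ω⟫ * f ‖S ω‖ =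
        ∫ ω : EuclideanSpace ℝ (Fin d), Real.cos ⟪T h, ω⟫ * f ‖ω‖ ∂(Measure.map S volume) := by
      rw [hme.integral_map]
      simp only [hTS]
    rw [h4, hmap, integral_smul_measure, h2, ENNReal.toReal_ofReal (abs_nonneg _), abs_inv,
      smul_eq_mul, ← mul_assoc, mul_inv_cancel₀ (abs_ne_zero.2 hdet), one_mul]

lemma aux_norm_le
    (T₁ S₁ T₂ S₂ : EuclideanSpace ℝ (Fin d) →ₗ[ℝ] EuclideanSpace ℝ (Fin d))
    (h1 : ∀ h ω, ⟪T₁ h, S₁ ω⟫ = ⟪h, ω⟫) (h2 : ∀ h ω, ⟪T₂ h, S₂ ω⟫ = ⟪h, ω⟫)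
    (hs : ∀ u, ∃ h, T₁ h = u) (hle : ∀ h, ‖T₂ h‖ ≤ ‖T₁ h‖) (ω : EuclideanSpace ℝ (Fin d)) :
    ‖S₁ ω‖ ≤ ‖S₂ ω‖ := by
  obtain ⟨h, hh⟩ := hs (S₁ ω)
  have : ‖S₁ ω‖ * ‖S₁ ω‖ ≤ ‖S₁ ω‖ * ‖S₂ ω‖ := by
    calc ‖S₁ ω‖ * ‖S₁ ω‖ = ⟪T₁ h, S₁ ω⟫ := by rw [hh, real_inner_self_eq_norm_mul_norm]
      _ = ⟪T₂ h, S₂ ω⟫ := by rw [h1, h2]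
      _ ≤ ‖T₂ h‖ * ‖S₂ ω‖ := real_inner_le_norm _ _
      _ ≤ ‖T₁ h‖ * ‖S₂ ω‖ := by gcongr; exact hle h
      _ = _ := by rw [hh]
  rcases (norm_nonneg (S₁ ω)).eq_or_lt with h0 | h0
  · rw [← h0]; positivity
  · exact le_of_mul_le_mul_left this h0

lemma aux_int {g : EuclideanSpace ℝ (Fin d) → ℝ} (hg : Integrable g)
    (h : EuclideanSpace ℝ (Fin d)) : Integrable fun ω => Real.cos ⟪h, ω⟫ * g ω := by
  refine Integrable.bdd_mul (c := 1) hg ?_ (ae_of_all _ fun ω => ?_)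
  · exact Continuous.aestronglyMeasurable (by fun_prop)
  · exact Real.abs_cos_le_one _

lemma aux_suff (C g : EuclideanSpace ℝ (Fin d) → ℝ) (hg : Integrable g)
    (hC : ∀ h, C h = ∫ ω, Real.cos ⟪h, ω⟫ * g ω) (hpos : ∀ ω, 0 ≤ g ω) :
    IsStationaryCovariance d C := by
  intro n x v
  have h1 : ∑ i, ∑ j, v i * v j * C (x i - x j) =
      ∫ ω, ∑ i, ∑ j, v i * v j * (Real.cos ⟪x i - x j, ω⟫ * g ω) := by
    rw [integral_finsetSum]
    · refine Finset.sum_congr rfl fun i _ => ?_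
      rw [integral_finsetSum]
      · refine Finset.sum_congr rfl fun j _ => ?_
        rw [hC, integral_const_mul]
      · exact fun j _ => (aux_int hg _).const_mul _
    · exact fun i _ => integrable_finsetSum _ fun j _ => (aux_int hg _).const_mul _
  rw [h1]
  refine integral_nonneg fun ω => ?_
  have h2 : ∑ i, ∑ j, v i * v j * (Real.cos ⟪x i - x j, ω⟫ * g ω) =
      ((∑ i, v i * Real.cos ⟪x i, ω⟫) ^ 2 + (∑ i, v i * Real.sin ⟪x i, ω⟫) ^ 2) * g ω := by
    rw [sq, sq, Finset.sum_mul_sum, Finset.sum_mul_sum, ← Finset.sum_add_distrib, Finset.sum_mul]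
    refine Finset.sum_congr rfl fun i _ => ?_
    rw [← Finset.sum_add_distrib, Finset.sum_mul]
    refine Finset.sum_congr rfl fun j _ => ?_
    rw [inner_sub_left, Real.cos_sub]
    ring
  simp only [Pi.zero_apply]
  rw [h2]
  have := hpos ω
  positivity

lemma aux_avg (C : EuclideanSpace ℝ (Fin d) → ℝ) (hC : IsStationaryCovariance d C)
    (hcont : Continuous C) (M : ℝ) (hM : ∀ h, |C h| ≤ M)
    (μ : Measure (EuclideanSpace ℝ (Fin d))) [IsProbabilityMeasure μ] :
    0 ≤ ∫ p, C (p.1 - p.2) ∂(μ.prod μ) := by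
  set I := ∫ p, C (p.1 - p.2) ∂(μ.prod μ) with hI
  have key : ∀ n : ℕ, 0 ≤ (n : ℝ) * C 0 + n * (n - 1) * I := by
    intro n
    let P : Measure (Fin n → EuclideanSpace ℝ (Fin d)) := Measure.pi fun _ => μ
    have hint : ∀ i j : Fin n, Integrable (fun x => C (x i - x j)) P := fun i j =>
      Integrable.of_bound (Continuous.aestronglyMeasurable (by fun_prop)) M
        (ae_of_all _ fun x => hM _)
    have hval : ∀ i j : Fin n, ∫ x, C (x i - x j) ∂P = if i = j then C 0 else I := by
      intro i j
      split_ifs with hij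
      · simp [hij]
      · have hind : IndepFun (fun x : Fin n → EuclideanSpace ℝ (Fin d) => x i)
            (fun x => x j) P :=
          (iIndepFun_pi (μ := fun _ : Fin n => μ) (X := fun _ x => x)
            (fun _ => aemeasurable_id)).indepFun hij
        have hm := hind.map_prod_eq_prod_map_map (measurable_pi_apply i).aemeasurable
          (measurable_pi_apply j).aemeasurable
        have ev : ∀ i : Fin n, Measure.map (fun x : Fin n → EuclideanSpace ℝ (Fin d) => x i) P = μ :=
          fun i => (measurePreserving_eval (fun _ : Fin n => μ) i).map_eq
        rw [ev, ev] at hm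
        rw [hI, ← hm, integral_map (by fun_prop) (Continuous.aestronglyMeasurable (by fun_prop))]
    have h0 : 0 ≤ ∫ x, ∑ i, ∑ j, C (x i - x j) ∂P := by
      refine integral_nonneg fun x => ?_
      simpa using hC n x (fun _ => 1)
    rw [integral_finsetSum _ fun i _ => integrable_finsetSum _ fun j _ => hint i j] at h0
    have h1 : ∀ i : Fin n, ∫ x, ∑ j, C (x i - x j) ∂P = C 0 + (n - 1) * I := by
      intro i
      rw [integral_finsetSum _ fun j _ => hint i j]
      simp only [hval]
      have : ∀ j, (if i = j then C 0 else I) = (if i = j then C 0 - I else 0) + I := by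
        intro j; split_ifs <;> ring
      simp only [this, Finset.sum_add_distrib]
      simp
      ring
    simp only [h1] at h0
    simp at h0
    linarith
  by_contra hneg
  push Not at hneg
  obtain ⟨n, hn⟩ := exists_nat_gt (C 0 / (-I))
  have h2 := key (n + 1)
  rw [div_lt_iff₀ (by linarith)] at hn
  push_cast at h2
  have h3 : ((n : ℝ) + 1) * (C 0 + n * I) < 0 := mul_neg_of_pos_of_neg (by positivity) (by linarith)
  nlinarith

lemma aux_gauss (ω : EuclideanSpace ℝ (Fin d)) :
    ∫ p : EuclideanSpace ℝ (Fin d) × EuclideanSpace ℝ (Fin d), Real.cos ⟪p.1 - p.2, ω⟫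
      ∂((stdGaussian (EuclideanSpace ℝ (Fin d))).prod (stdGaussian (EuclideanSpace ℝ (Fin d))))
      = Real.exp (-‖ω‖ ^ 2) := by
  set μ := stdGaussian (EuclideanSpace ℝ (Fin d))
  have hch := charFun_stdGaussian ω
  rw [charFun_apply] at hch
  have hi : Integrable (fun x : EuclideanSpace ℝ (Fin d) => Complex.exp (⟪x, ω⟫ * Complex.I)) μ :=
    Integrable.of_bound (Continuous.aestronglyMeasurable (by fun_prop)) 1
      (ae_of_all _ fun x => by rw [Complex.norm_exp_ofReal_mul_I])
  have hr : Complex.exp (-(‖ω‖ : ℂ) ^ 2 / 2) = ((Real.exp (-‖ω‖ ^ 2 / 2) : ℝ) : ℂ) := by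
    push_cast; rfl
  rw [hr] at hch
  have hcos : ∫ x, Real.cos ⟪x, ω⟫ ∂μ = Real.exp (-‖ω‖ ^ 2 / 2) := by
    have := congrArg Complex.re hch
    rw [← RCLike.re_eq_complex_re, ← integral_re hi] at this
    simpa only [RCLike.re_eq_complex_re, Complex.exp_ofReal_mul_I_re, Complex.ofReal_re] using this
  have hsin : ∫ x, Real.sin ⟪x, ω⟫ ∂μ = 0 := by
    have := congrArg Complex.im hch
    rw [← RCLike.im_eq_complex_im, ← integral_im hi] at this
    simpa only [RCLike.im_eq_complex_im, Complex.exp_ofReal_mul_I_im, Complex.ofReal_im] using this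
  simp only [inner_sub_left, Real.cos_sub]
  rw [integral_add, integral_prod_mul (fun x => Real.cos ⟪x, ω⟫) (fun x => Real.cos ⟪x, ω⟫),
    integral_prod_mul (fun x => Real.sin ⟪x, ω⟫) (fun x => Real.sin ⟪x, ω⟫), hcos, hsin,
    ← Real.exp_add]
  · simp
  · refine Integrable.of_bound (Continuous.aestronglyMeasurable (by fun_prop)) 1
      (ae_of_all _ fun x => ?_)
    rw [norm_mul]
    exact mul_le_one₀ (Real.abs_cos_le_one _) (norm_nonneg _) (Real.abs_cos_le_one _)
  · refine Integrable.of_bound (Continuous.aestronglyMeasurable (by fun_prop)) 1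
      (ae_of_all _ fun x => ?_)
    rw [norm_mul]
    exact mul_le_one₀ (Real.abs_sin_le_one _) (norm_nonneg _) (Real.abs_sin_le_one _)

lemma aux_nec (C g : EuclideanSpace ℝ (Fin d) → ℝ) (hg : Integrable g)
    (hC : ∀ h, C h = ∫ ω, Real.cos ⟪h, ω⟫ * g ω) (hpsd : IsStationaryCovariance d C) :
    0 ≤ ∫ ω, Real.exp (-‖ω‖ ^ 2) * g ω := by
  have hle : ∀ h ω : EuclideanSpace ℝ (Fin d), ‖Real.cos ⟪h, ω⟫ * g ω‖ ≤ ‖g ω‖ := by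
    intro h ω
    rw [norm_mul]
    exact mul_le_of_le_one_left (norm_nonneg _) (Real.abs_cos_le_one _)
  have hcont : Continuous C := by
    rw [funext hC]
    refine continuous_of_dominated (bound := fun ω => ‖g ω‖) (fun h => (aux_int hg h).1)
      (fun h => ae_of_all _ (hle h)) hg.norm (ae_of_all _ fun ω => by fun_prop)
  have hM : ∀ h, |C h| ≤ ∫ ω, ‖g ω‖ := by
    intro h
    rw [hC]
    exact norm_integral_le_of_norm_le hg.norm (ae_of_all _ (hle h))
  have h := aux_avg C hpsd hcont _ hM (stdGaussian (EuclideanSpace ℝ (Fin d)))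
  simp only [hC] at h
  rw [integral_integral_swap] at h
  · simpa only [integral_mul_const, aux_gauss] using h
  · refine Integrable.bdd_mul (c := 1) (hg.comp_snd _) ?_ (ae_of_all _ fun p => ?_)
    · exact Continuous.aestronglyMeasurable (by fun_prop)
    · exact Real.abs_cos_le_one _

lemma aux_nec' (C g : EuclideanSpace ℝ (Fin d) → ℝ) (hg : Integrable g)
    (hC : ∀ h, C h = ∫ ω, Real.cos ⟪h, ω⟫ * g ω) (hpsd : IsStationaryCovariance d C)
    (t : ℝ) (ht : 0 < t) :
    0 ≤ ∫ ω, Real.exp (-‖ω‖ ^ 2) * g (t • ω) := by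
  set c := |(t ^ Module.finrank ℝ (EuclideanSpace ℝ (Fin d)))⁻¹| with hc
  refine aux_nec (fun h => c * C (t⁻¹ • h)) _ (hg.comp_smul ht.ne') ?_ ?_
  · intro h
    have := Measure.integral_comp_smul volume (fun ω => Real.cos ⟪t⁻¹ • h, ω⟫ * g ω) t
    rw [smul_eq_mul, ← hC, ← hc] at this
    rw [← this]
    refine integral_congr_ae (ae_of_all _ fun ω => ?_)
    simp only [real_inner_smul_left, real_inner_smul_right]
    rw [← mul_assoc, mul_inv_cancel₀ ht.ne', one_mul]
  · intro n x v
    have := mul_nonneg (abs_nonneg _ : 0 ≤ c) (hpsd n (fun i => t⁻¹ • x i) v)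
    rw [Finset.mul_sum] at this
    refine this.trans_eq (Finset.sum_congr rfl fun i _ => ?_)
    rw [Finset.mul_sum]
    refine Finset.sum_congr rfl fun j _ => ?_
    simp only [smul_sub, hc]
    ring

lemma aux_lim (C g : EuclideanSpace ℝ (Fin d) → ℝ) (hg : Integrable g) (L M : ℝ)
    (hC : ∀ h, C h = ∫ ω, Real.cos ⟪h, ω⟫ * g ω) (hpsd : IsStationaryCovariance d C)
    (hM : ∀ ω, |g ω| ≤ M)
    (hL : ∀ᵐ ω : EuclideanSpace ℝ (Fin d), Tendsto (fun t : ℝ => g (t • ω)) (𝓝[>] 0) (𝓝 L)) :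
    0 ≤ L := by
  have hgi : Integrable (fun ω : EuclideanSpace ℝ (Fin d) => Real.exp (-‖ω‖ ^ 2)) := by
    have := (GaussianFourier.integrable_cexp_neg_mul_sq_norm_add (b := 1) (by simp) 0
      (0 : EuclideanSpace ℝ (Fin d))).re
    refine this.congr (ae_of_all _ fun ω => ?_)
    simp only [zero_mul, add_zero, RCLike.re_eq_complex_re, neg_mul, one_mul]
    rw [← Complex.ofReal_pow, ← Complex.ofReal_neg, Complex.exp_ofReal_re]
  have hlim : Tendsto (fun t : ℝ => ∫ ω, Real.exp (-‖ω‖ ^ 2) * g (t • ω)) (𝓝[>] 0)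
      (𝓝 (∫ ω : EuclideanSpace ℝ (Fin d), Real.exp (-‖ω‖ ^ 2) * L)) := by
    refine tendsto_integral_filter_of_dominated_convergence
      (fun ω => Real.exp (-‖ω‖ ^ 2) * M) ?_ ?_ (hgi.mul_const _) ?_
    · filter_upwards [self_mem_nhdsWithin] with t ht
      exact hgi.1.mul (hg.comp_smul (ne_of_gt ht)).1
    · refine Eventually.of_forall fun t => ae_of_all _ fun ω => ?_
      rw [norm_mul, Real.norm_of_nonneg (Real.exp_pos _).le]
      exact mul_le_mul_of_nonneg_left (hM _) (Real.exp_pos _).le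
    · filter_upwards [hL] with ω hω
      exact hω.const_mul _
  have h0 : 0 ≤ ∫ ω : EuclideanSpace ℝ (Fin d), Real.exp (-‖ω‖ ^ 2) * L := by
    refine ge_of_tendsto hlim ?_
    filter_upwards [self_mem_nhdsWithin] with t ht
    exact aux_nec' C g hg hC hpsd t ht
  rw [integral_mul_const] at h0
  have hpos : 0 < ∫ ω : EuclideanSpace ℝ (Fin d), Real.exp (-‖ω‖ ^ 2) := by
    rw [integral_pos_iff_support_of_nonneg (fun ω => (Real.exp_pos _).le) hgi]
    have : Function.support (fun ω : EuclideanSpace ℝ (Fin d) => Real.exp (-‖ω‖ ^ 2)) = Set.univ :=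
      by
      ext ω
      simp [(Real.exp_pos _).ne']
    rw [this]
    exact Measure.measure_univ_pos.2 (NeZero.ne _)
  exact nonneg_of_mul_nonneg_right h0 hpos

end

theorem statement_1 (d : ℕ) (hd : 1 ≤ d) (φ f : ℝ → ℝ)
    (hφ : MemPhi d φ) (hf : IsRadialSpectralDensity d φ f)
    (hfpos : ∀ u : ℝ, 0 ≤ u → 0 < f u) (hfmono : AntitoneOn f (Set.Ici 0))
    (A₁ A₂ : Matrix (Fin d) (Fin d) ℝ) (hA₁ : A₁.PosDef) (hA₂ : A₂.PosDef)
    (hA₁₂ : (A₁ - A₂).PosSemidef)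
    (b₁ b₂ : ℝ) (hb₁ : 0 ≤ b₁) (hb₂ : 0 ≤ b₂) :
    IsStationaryCovariance d
      (fun h => b₁ * φ (Real.sqrt (quadForm A₁ h)) - b₂ * φ (Real.sqrt (quadForm A₂ h))) ↔
    b₂ * Real.sqrt (A₁.det / A₂.det) ≤ b₁ := by
  obtain ⟨T₁, S₁, hq₁, hTS₁, hsur₁, hdet₁⟩ := aux_matrix A₁ hA₁
  obtain ⟨T₂, S₂, hq₂, hTS₂, hsur₂, hdet₂⟩ := aux_matrix A₂ hA₂
  have hs₁ : 0 < Real.sqrt A₁.det := Real.sqrt_pos.2 hA₁.det_pos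
  have hs₂ : 0 < Real.sqrt A₂.det := Real.sqrt_pos.2 hA₂.det_pos
  have hd₁ : LinearMap.det S₁ ≠ 0 := abs_pos.1 (hdet₁ ▸ inv_pos.2 hs₁)
  have hd₂ : LinearMap.det S₂ ≠ 0 := abs_pos.1 (hdet₂ ▸ inv_pos.2 hs₂)
  obtain ⟨hi₁, hF₁⟩ := aux_change φ f hf T₁ S₁ hTS₁ hd₁
  obtain ⟨hi₂, hF₂⟩ := aux_change φ f hf T₂ S₂ hTS₂ hd₂
  rw [hdet₁] at hF₁
  rw [hdet₂] at hF₂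
  have hTle : ∀ h, ‖T₂ h‖ ≤ ‖T₁ h‖ := by
    intro h
    refine le_of_sq_le_sq ?_ (norm_nonneg _)
    rw [← hq₁, ← hq₂, ← sub_nonneg]
    have := hA₁₂.dotProduct_mulVec_nonneg (WithLp.ofLp h)
    refine this.trans_eq ?_
    simp only [quadForm, dotProduct, Matrix.mulVec, Finset.mul_sum, star_trivial,
      Matrix.sub_apply, ← Finset.sum_sub_distrib]
    refine Finset.sum_congr rfl fun i _ => Finset.sum_congr rfl fun j _ => ?_
    ring
  have hSle := aux_norm_le T₁ S₁ T₂ S₂ hTS₁ hTS₂ hsur₁ hTle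
  set k₁ := b₁ * (Real.sqrt A₁.det)⁻¹ with hk₁
  set k₂ := b₂ * (Real.sqrt A₂.det)⁻¹ with hk₂
  have hk₁0 : 0 ≤ k₁ := by positivity
  have hk₂0 : 0 ≤ k₂ := by positivity
  have hiff : b₂ * Real.sqrt (A₁.det / A₂.det) ≤ b₁ ↔ k₂ ≤ k₁ := by
    rw [Real.sqrt_div hA₁.det_pos.le, hk₁, hk₂, ← div_eq_mul_inv, ← div_eq_mul_inv,
      le_div_iff₀ hs₁]
    apply iff_of_eq
    congr 1
    ring
  rw [hiff]
  set g : EuclideanSpace ℝ (Fin d) → ℝ := fun ω => k₁ * f ‖S₁ ω‖ - k₂ * f ‖S₂ ω‖ with hg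
  have hgi : Integrable g := (hi₁.const_mul _).sub (hi₂.const_mul _)
  have hC : ∀ h, b₁ * φ (Real.sqrt (quadForm A₁ h)) - b₂ * φ (Real.sqrt (quadForm A₂ h)) =
      ∫ ω, Real.cos ⟪h, ω⟫ * g ω := by
    intro h
    rw [hq₁, hq₂, Real.sqrt_sq (norm_nonneg _), Real.sqrt_sq (norm_nonneg _), hF₁, hF₂,
      ← mul_assoc, ← mul_assoc, ← integral_const_mul, ← integral_const_mul, ← integral_sub
        ((aux_int hi₁ h).const_mul _) ((aux_int hi₂ h).const_mul _)]
    refine integral_congr_ae (ae_of_all _ fun ω => ?_)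
    simp only [hg, hk₁, hk₂]
    ring
  constructor
  · intro hpsd
    have hf0 : ∀ u, 0 ≤ u → f u ≤ f 0 := fun u hu => hfmono (Set.mem_Ici.2 le_rfl) hu hu
    have hbdd : BddAbove (f '' Set.Ioi 0) := by
      refine ⟨f 0, ?_⟩
      rintro _ ⟨u, hu, rfl⟩
      exact hf0 u (le_of_lt hu)
    have hlim := (hfmono.mono Set.Ioi_subset_Ici_self).tendsto_nhdsGT hbdd
    set ℓ := sSup (f '' Set.Ioi 0) with hℓ
    have hℓ0 : 0 < ℓ :=
      (hfpos 1 zero_le_one).trans_le (le_csSup hbdd ⟨1, Set.mem_Ioi.2 one_pos, rfl⟩)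
    have hS : ∀ S : EuclideanSpace ℝ (Fin d) →ₗ[ℝ] EuclideanSpace ℝ (Fin d),
        LinearMap.det S ≠ 0 → ∀ ω, ω ≠ 0 →
        Tendsto (fun t : ℝ => f ‖S (t • ω)‖) (𝓝[>] 0) (𝓝 ℓ) := by
      intro S hS ω hω
      have hSω : 0 < ‖S ω‖ := by
        rw [norm_pos_iff]
        intro h0
        apply hω
        have hker := LinearMap.ker_eq_bot'.1
          (LinearMap.isUnit_iff_ker_eq_bot S |>.1 ((LinearMap.isUnit_iff_isUnit_det S).2 hS.isUnit))
        exact hker ω h0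
      refine hlim.comp ?_
      refine tendsto_nhdsWithin_iff.2 ⟨?_, ?_⟩
      · have : Continuous fun t : ℝ => ‖S (t • ω)‖ := by
          simp only [map_smul]
          fun_prop
        have h2 := this.tendsto 0
        simp only [zero_smul, map_zero, norm_zero] at h2
        exact h2.mono_left nhdsWithin_le_nhds
      · filter_upwards [self_mem_nhdsWithin] with t ht
        rw [map_smul, norm_smul]
        exact mul_pos (norm_pos_iff.2 (ne_of_gt ht)) hSω
    have hres := aux_lim _ g hgi (k₁ * ℓ - k₂ * ℓ) (k₁ * f 0 + k₂ * f 0) hC hpsd ?_ ?_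
    · rw [← sub_mul] at hres
      linarith [nonneg_of_mul_nonneg_left hres hℓ0]
    · intro ω
      have e1 := mul_le_mul_of_nonneg_left (hf0 ‖S₁ ω‖ (norm_nonneg _)) hk₁0
      have e2 := mul_le_mul_of_nonneg_left (hf0 ‖S₂ ω‖ (norm_nonneg _)) hk₂0
      have e3 := mul_nonneg hk₁0 (hfpos ‖S₁ ω‖ (norm_nonneg _)).le
      have e4 := mul_nonneg hk₂0 (hfpos ‖S₂ ω‖ (norm_nonneg _)).le
      rw [abs_le]
      simp only [hg]
      constructor <;> linarith
    · haveI : Nonempty (Fin d) := ⟨⟨0, hd⟩⟩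
      have hne : ∀ᵐ ω : EuclideanSpace ℝ (Fin d), ω ≠ 0 := by
        rw [ae_iff]
        simp
      filter_upwards [hne] with ω hω
      exact ((hS S₁ hd₁ ω hω).const_mul _).sub ((hS S₂ hd₂ ω hω).const_mul _)
  · intro hk
    refine aux_suff _ g hgi hC fun ω => ?_
    have e1 : f ‖S₂ ω‖ ≤ f ‖S₁ ω‖ := hfmono (norm_nonneg _) (norm_nonneg _) (hSle ω)
    have e2 := (hfpos ‖S₂ ω‖ (norm_nonneg _)).le
    have e3 := mul_le_mul hk e1 e2 hk₁0
    simp only [hg]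
    linarith
end
end

section
/- Let d ≥ 1 and let φ ∈ Φ_d have a strictly positive nonincreasing d-radial spectral density f_d. Let A₁, A₂ be symmetric positive definite real d×d matrices such that the minimum eigenvalue of A₁ is at least the maximum eigenvalue of A₂, and let b₁, b₂ ≥ 0. Then the function h ↦ b₁ φ(√(hᵀA₁h)) − b₂ φ(√(hᵀA₂h)) is a stationary covariance function on ℝ^d if and only if b₁ ≥ b₂ (∏_{j=1}^d λ_j(A₁)/λ_j(A₂))^{1/2}, where λ₁(A_i),…,λ_d(A_i) denote the eigenvalues of A_i. -/
open MeasureTheory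
open scoped BigOperators RealInnerProductSpace

noncomputable section

abbrev EE (d : ℕ) := EuclideanSpace ℝ (Fin d)

lemma quadForm_eq {d : ℕ} (A : Matrix (Fin d) (Fin d) ℝ) (hA : A.IsHermitian) (h : EE d) :
    quadForm A h = ∑ i, hA.eigenvalues i * (hA.eigenvectorBasis.repr h i)^2 := by
  have h1 : quadForm A h = ⟪h, Matrix.toEuclideanLin A h⟫ := by
    simp only [quadForm, PiLp.inner_apply, Matrix.toLpLin_apply, Matrix.mulVec, dotProduct]
    refine Finset.sum_congr rfl fun i _ => ?_
    simp [Finset.sum_mul]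
    refine Finset.sum_congr rfl fun j _ => by ring
  rw [h1, ← hA.eigenvectorBasis.sum_inner_mul_inner]
  refine Finset.sum_congr rfl fun i _ => ?_
  have hs := (Matrix.isSymmetric_toEuclideanLin_iff.mpr hA)
  have h2 : Matrix.toEuclideanLin A (hA.eigenvectorBasis i) = hA.eigenvalues i • hA.eigenvectorBasis i := by
    have := hA.mulVec_eigenvectorBasis i
    ext j
    simpa [Matrix.toLpLin_apply] using congrFun this j
  rw [← hs, h2, OrthonormalBasis.repr_apply_apply, real_inner_comm, inner_smul_left]
  simp; ring

lemma diag_map {d : ℕ} (s : Fin d → ℝ) (hs : ∀ i, 0 < s i) :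
   Measure.map (Matrix.toEuclideanLin (Matrix.diagonal s)) (volume : Measure (EE d)) =
     ENNReal.ofReal (∏ i, s i)⁻¹ • volume := by
  have hp : 0 < ∏ i, s i := Finset.prod_pos fun i _ => hs i
  have hdet : LinearMap.det (Matrix.toEuclideanLin (Matrix.diagonal s)) = ∏ i, s i := by
    rw [show Matrix.toEuclideanLin (Matrix.diagonal s) = Matrix.toLin (PiLp.basisFun 2 ℝ (Fin d)) (PiLp.basisFun 2 ℝ (Fin d)) (Matrix.diagonal s) from by rw [← Matrix.toLpLin_eq_toLin], LinearMap.det_toLin, Matrix.det_diagonal]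
  rw [Measure.map_linearMap_addHaar_eq_smul_addHaar _ (by rw [hdet]; exact hp.ne'), hdet, abs_of_pos (by positivity)]

lemma change_of_var {d : ℕ} (A : Matrix (Fin d) (Fin d) ℝ) (hA : A.PosDef) :
   ∃ L K : EE d →ₗ[ℝ] EE d, (∀ h ω, ⟪K h, L ω⟫ = ⟪h, ω⟫) ∧
     (∀ h, ‖K h‖ = √ (quadForm A h)) ∧ 
     (∀ ω, ‖L ω‖^2 = ∑ i, (hA.1.eigenvalues i)⁻¹ * (hA.1.eigenvectorBasis.repr ω i)^2) ∧
     Measure.map L volume = ENNReal.ofReal (√ (∏ i, hA.1.eigenvalues i)) • volume := by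
  have hpos := hA.eigenvalues_pos
  set l := hA.1.eigenvalues with hl
  set R := hA.1.eigenvectorBasis.repr with hR
  have hprod : (∏ i, (√ (l i))⁻¹)⁻¹ = √ (∏ i, l i) := by
    rw [Real.sqrt_prod _ (fun i _ => (hpos i).le)]; simp
  refine ⟨Matrix.toEuclideanLin (Matrix.diagonal fun i => (√ (l i))⁻¹) ∘ₗ R.toLinearEquiv.toLinearMap,
    Matrix.toEuclideanLin (Matrix.diagonal fun i => (√ (l i))) ∘ₗ R.toLinearEquiv.toLinearMap, ?_, ?_, ?_, ?_⟩
  · intro h ω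
    rw [← R.inner_map_map h ω]
    simp only [PiLp.inner_apply, Matrix.toLpLin_apply, LinearMap.comp_apply]
    refine Finset.sum_congr rfl fun i _ => ?_
    have := (Real.sqrt_pos.2 (hpos i)).ne'
    simp [Matrix.mulVec_diagonal]
    field_simp
  · intro h
    rw [quadForm_eq A hA.1, EuclideanSpace.norm_eq]
    congr 1
    refine Finset.sum_congr rfl fun i _ => ?_
    simp [Matrix.toLpLin_apply, Matrix.mulVec_diagonal, mul_pow, Real.sq_sqrt (hpos i).le]
    simp [hl, hR]
  · intro h
    rw [EuclideanSpace.real_norm_sq_eq]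
    refine Finset.sum_congr rfl fun i _ => ?_
    simp [Matrix.toLpLin_apply, Matrix.mulVec_diagonal, mul_pow, Real.sq_sqrt (hpos i).le]
  · rw [LinearMap.coe_comp, ← Measure.map_map]
    · have : Measure.map R (volume : Measure (EE d)) = volume := R.measurePreserving.map_eq
      erw [this]
      rw [diag_map _ (fun i => by have := hpos i; positivity), hprod]
    · exact (LinearMap.continuous_of_finiteDimensional _).measurable
    · exact (LinearMap.continuous_of_finiteDimensional _).measurable

lemma spectral {d : ℕ} (φ f : ℝ → ℝ) (hf : IsRadialSpectralDensity d φ f)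
    (A : Matrix (Fin d) (Fin d) ℝ) (hA : A.PosDef) :
    ∃ L : EE d →ₗ[ℝ] EE d,
     (∀ ω, ‖L ω‖^2 = ∑ i, (hA.1.eigenvalues i)⁻¹ * (hA.1.eigenvectorBasis.repr ω i)^2) ∧
     Integrable (fun ω => f ‖L ω‖) ∧
     ∀ h, φ (√ (quadForm A h)) =
       ∫ ω, Real.cos ⟪h, ω⟫ * ((√ (∏ i, hA.1.eigenvalues i))⁻¹ * f ‖L ω‖) := by
  obtain ⟨L, K, h1, h2, h3, h4⟩ := change_of_var A hA
  obtain ⟨hf0, hf1, hf2⟩ := hf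
  have hpos := hA.eigenvalues_pos
  have hP : 0 < √ (∏ i, hA.1.eigenvalues i) := Real.sqrt_pos.2 (Finset.prod_pos fun i _ => hpos i)
  have hL : Measurable L := (LinearMap.continuous_of_finiteDimensional L).measurable
  have hreal : ∀ h : EE d, φ ‖h‖ = ∫ ω : EE d, Real.cos ⟪h, ω⟫ * f ‖ω‖ := by
    intro h
    have := congrArg Complex.re (hf2 h)
    rw [Complex.ofReal_re] at this
    rw [this, ← RCLike.re_eq_complex_re, ← integral_re]
    · refine integral_congr_ae (Filter.Eventually.of_forall fun ω => ?_)
      simp [Complex.exp_re]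
    · refine (hf1.ofReal (𝕜 := ℂ)).bdd_mul (c := 1) ?_ ?_
      · apply Continuous.aestronglyMeasurable; fun_prop
      · refine Filter.Eventually.of_forall fun ω => ?_
        rw [mul_comm, Complex.norm_exp_ofReal_mul_I]
  refine ⟨L, h3, ?_, ?_⟩
  · have : Integrable (fun ω : EE d => f ‖ω‖) (Measure.map L volume) := by
      rw [h4]; exact hf1.smul_measure ENNReal.ofReal_ne_top
    exact this.comp_measurable hL
  · intro h
    rw [← h2, hreal]
    have e : ∫ ω, Real.cos ⟪K h, ω⟫ * f ‖ω‖ ∂(Measure.map L volume) = 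
        ∫ ω, Real.cos ⟪h, ω⟫ * f ‖L ω‖ := by
      rw [integral_map hL.aemeasurable]
      · simp [h1]
      · rw [h4]
        refine AEStronglyMeasurable.smul_measure ?_ _
        refine AEStronglyMeasurable.mul ?_ hf1.1
        apply Continuous.aestronglyMeasurable; fun_prop
    rw [h4, integral_smul_measure, ENNReal.toReal_ofReal hP.le] at e
    simp_rw [mul_left_comm _ (√ (∏ i, hA.1.eigenvalues i))⁻¹]
    rw [integral_const_mul, ← e, smul_eq_mul, inv_mul_cancel_left₀ hP.ne']

lemma int_cos {d : ℕ} {g : EE d → ℝ} (hg : Integrable g) (h : EE d) :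
    Integrable (fun ω => Real.cos ⟪h, ω⟫ * g ω) := by
  refine hg.bdd_mul (c := 1) ?_ ?_
  · apply Continuous.aestronglyMeasurable; fun_prop
  · exact Filter.Eventually.of_forall fun ω => Real.abs_cos_le_one _

lemma psd_of_nonneg {d : ℕ} (C g : EE d → ℝ) (hg : Integrable g) (hg0 : ∀ ω, 0 ≤ g ω)
    (hC : ∀ h, C h = ∫ ω, Real.cos ⟪h, ω⟫ * g ω) : IsStationaryCovariance d C := by
  intro n x v
  have : ∑ i, ∑ j, v i * v j * C (x i - x j) =
      ∫ ω, ∑ i, ∑ j, v i * v j * (Real.cos ⟪x i - x j, ω⟫ * g ω) := by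
    rw [integral_finsetSum]
    · refine Finset.sum_congr rfl fun i _ => ?_
      rw [integral_finsetSum]
      · refine Finset.sum_congr rfl fun j _ => ?_
        rw [hC, integral_const_mul]
      · exact fun j _ => (int_cos hg _).const_mul _
    · exact fun i _ => integrable_finsetSum _ fun j _ => (int_cos hg _).const_mul _
  rw [this]
  refine integral_nonneg fun ω => ?_
  have : ∑ i, ∑ j, v i * v j * (Real.cos ⟪x i - x j, ω⟫ * g ω) =
     ((∑ i, v i * Real.cos ⟪x i, ω⟫)^2 + (∑ i, v i * Real.sin ⟪x i, ω⟫)^2) * g ω := by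
    rw [sq, sq, Finset.sum_mul_sum, Finset.sum_mul_sum, ← Finset.sum_add_distrib, Finset.sum_mul]
    refine Finset.sum_congr rfl fun i _ => ?_
    rw [← Finset.sum_add_distrib, Finset.sum_mul]
    refine Finset.sum_congr rfl fun j _ => ?_
    rw [inner_sub_left, Real.cos_sub]; ring
  simp only [Pi.zero_apply]
  rw [this]
  exact mul_nonneg (by positivity) (hg0 ω)

lemma C_cont {d : ℕ} (C g : EE d → ℝ) (hg : Integrable g)
    (hC : ∀ h, C h = ∫ ω, Real.cos ⟪h, ω⟫ * g ω) : Continuous C := by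
  rw [funext hC]
  refine continuous_of_dominated (bound := fun ω => ‖g ω‖) (fun h => (int_cos hg h).1) ?_ hg.norm ?_
  · intro h
    refine Filter.Eventually.of_forall fun ω => ?_
    rw [norm_mul]
    exact mul_le_of_le_one_left (norm_nonneg _) (Real.abs_cos_le_one _)
  · exact Filter.Eventually.of_forall fun ω => by fun_prop

lemma C_bdd {d : ℕ} (C g : EE d → ℝ) (hg : Integrable g)
    (hC : ∀ h, C h = ∫ ω, Real.cos ⟪h, ω⟫ * g ω) (h : EE d) : ‖C h‖ ≤ ∫ ω, ‖g ω‖ := by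
  rw [hC]
  refine norm_integral_le_of_norm_le hg.norm (Filter.Eventually.of_forall fun ω => ?_)
  rw [norm_mul]
  exact mul_le_of_le_one_left (norm_nonneg _) (Real.abs_cos_le_one _)

lemma double_nonneg {d : ℕ} (C : EE d → ℝ) (hc : Continuous C) (B : ℝ) (hB : ∀ h, ‖C h‖ ≤ B)
    (hpsd : IsStationaryCovariance d C) (μ : Measure (EE d)) [IsProbabilityMeasure μ] :
    0 ≤ ∫ p : EE d × EE d, C (p.1 - p.2) ∂(μ.prod μ) := by
  set J := ∫ p : EE d × EE d, C (p.1 - p.2) ∂(μ.prod μ) with hJ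
  have key : ∀ n : ℕ, 0 ≤ (n : ℝ) * C 0 + n * (n - 1) * J := by
    intro n
    let M := Measure.pi (fun _ : Fin n => μ)
    have hInt : ∀ i j : Fin n, Integrable (fun x : Fin n → EE d => C (x i - x j)) M := by
      intro i j
      refine Integrable.of_bound (C := B) ?_ (Filter.Eventually.of_forall fun x => hB _)
      apply Continuous.aestronglyMeasurable; fun_prop
    have h1 : 0 ≤ ∫ x, ∑ i : Fin n, ∑ j : Fin n, C (x i - x j) ∂M := by
      refine integral_nonneg fun x => ?_
      simpa using hpsd n x (fun _ => 1)
    rw [integral_finsetSum _ (fun i _ => integrable_finsetSum _ fun j _ => hInt i j)] at h1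
    have h2 : ∀ i j : Fin n, ∫ x, C (x i - x j) ∂M = if i = j then C 0 else J := by
      intro i j
      split_ifs with hij
      · subst hij; simp
      · have hind := (ProbabilityTheory.iIndepFun_pi (μ := fun _ : Fin n => μ)
          (X := fun _ => (id : EE d → EE d)) (fun i => aemeasurable_id)).indepFun hij
        simp only [id] at hind
        rw [ProbabilityTheory.indepFun_iff_map_prod_eq_prod_map_map
          (measurable_pi_apply i).aemeasurable (measurable_pi_apply j).aemeasurable] at hind
        have hm : ∀ k : Fin n, Measure.map (fun x : Fin n → EE d => x k) M = μ := fun k =>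
          (measurePreserving_eval (fun _ : Fin n => μ) k).map_eq
        change Measure.map _ M = (Measure.map _ M).prod (Measure.map _ M) at hind
        rw [hm, hm] at hind
        rw [hJ, ← hind, integral_map]
        · apply Measurable.aemeasurable; fun_prop
        · apply Continuous.aestronglyMeasurable; fun_prop
    have h3 : ∀ i : Fin n, ∫ x, ∑ j : Fin n, C (x i - x j) ∂M = C 0 + (n - 1) * J := by
      intro i
      rw [integral_finsetSum _ (fun j _ => hInt i j)]
      simp_rw [h2]
      have : ∀ j, (if i = j then C 0 else J) = (if i = j then C 0 - J else 0) + J := by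
        intro j; split_ifs <;> ring
      simp_rw [this]
      rw [Finset.sum_add_distrib]
      simp
      ring
    simp_rw [h3] at h1
    simp at h1
    linarith
  by_contra hneg
  push Not at hneg
  obtain ⟨n, hn⟩ := exists_nat_gt (1 + C 0 / (-J))
  have hJ' : 0 < -J := by linarith
  have hC0 : 0 ≤ C 0 := by have := key 1; simpa using this
  have hn1 : (0 : ℝ) < n := by have : 0 ≤ C 0 / (-J) := by positivity
                               linarith
  have h4 : C 0 < (n - 1) * (-J) := by
    rw [← div_lt_iff₀ hJ']; linarith
  have := key n
  have : 0 ≤ (n : ℝ) * (C 0 + (n - 1) * J) := by linarith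
  have := nonneg_of_mul_nonneg_right this hn1
  linarith

open ProbabilityTheory in
lemma gauss_double {d : ℕ} (ω : EE d) :
    ∫ p : EE d × EE d, Real.cos ⟪p.1 - p.2, ω⟫ ∂((stdGaussian (EE d)).prod (stdGaussian (EE d)))
      = Real.exp (-‖ω‖^2) := by
  have h := integral_prod_mul (μ := stdGaussian (EE d)) (ν := stdGaussian (EE d))
    (fun x => Complex.exp (⟪x, ω⟫ * Complex.I)) (fun x => Complex.exp (⟪x, -ω⟫ * Complex.I))
  rw [← charFun_apply, ← charFun_apply, charFun_stdGaussian, charFun_stdGaussian, ← Complex.exp_add] at h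
  have h2 := congrArg Complex.re h
  rw [← RCLike.re_eq_complex_re, ← integral_re] at h2
  · have e : (-(‖ω‖:ℂ)^2/2 + -(‖-ω‖:ℂ)^2/2) = ((-‖ω‖^2 : ℝ) : ℂ) := by
      rw [norm_neg]; push_cast; ring
    rw [e, ← Complex.ofReal_exp] at h2
    simp only [RCLike.re_eq_complex_re, Complex.ofReal_re] at h2
    rw [← h2]
    refine integral_congr_ae (Filter.Eventually.of_forall fun p => ?_)
    simp only
    rw [← Complex.exp_add, inner_neg_right, inner_sub_left, ← add_mul, ← Complex.ofReal_add, Complex.exp_ofReal_mul_I_re, sub_eq_add_neg]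
  · refine Integrable.of_bound (C := 1) ?_ (Filter.Eventually.of_forall fun x => ?_)
    · apply Continuous.aestronglyMeasurable; fun_prop
    · rw [norm_mul, Complex.norm_exp_ofReal_mul_I, Complex.norm_exp_ofReal_mul_I]; simp

open ProbabilityTheory in
lemma gauss_nonneg {d : ℕ} (C g : EE d → ℝ) (hg : Integrable g)
    (hC : ∀ h, C h = ∫ ω, Real.cos ⟪h, ω⟫ * g ω) (hpsd : IsStationaryCovariance d C) :
    0 ≤ ∫ ω, Real.exp (-‖ω‖^2) * g ω := by
  have h := double_nonneg C (C_cont C g hg hC) _ (C_bdd C g hg hC) hpsd (stdGaussian (EE d))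
  simp_rw [hC] at h
  rw [integral_integral_swap] at h
  · simp_rw [integral_mul_const, gauss_double] at h
    exact h
  · have h1 : Integrable (fun p : (EE d × EE d) × EE d => g p.2)
        (((stdGaussian (EE d)).prod (stdGaussian (EE d))).prod volume) := hg.comp_snd _
    refine h1.bdd_mul (c := 1) (f := fun p : (EE d × EE d) × EE d => Real.cos ⟪p.1.1 - p.1.2, p.2⟫) ?_ ?_
    · apply Continuous.aestronglyMeasurable; fun_prop
    · exact Filter.Eventually.of_forall fun ω => Real.abs_cos_le_one _

lemma gauss_nonneg_scaled {d : ℕ} (C g : EE d → ℝ) (hg : Integrable g)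
    (hC : ∀ h, C h = ∫ ω, Real.cos ⟪h, ω⟫ * g ω) (hpsd : IsStationaryCovariance d C)
    (t : ℝ) (ht : 0 < t) :
    0 ≤ ∫ ω, Real.exp (-‖ω‖^2) * g (t • ω) := by
  let k : ℝ := |(t ^ Module.finrank ℝ (EE d))⁻¹|
  refine gauss_nonneg (fun h => k * C (t⁻¹ • h)) (fun ω => g (t • ω)) (hg.comp_smul ht.ne') ?_ ?_
  · intro h
    have := Measure.integral_comp_smul volume (fun ω => Real.cos ⟪h, t⁻¹ • ω⟫ * g ω) t
    simp only [inv_smul_smul₀ ht.ne'] at this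
    rw [this, hC, smul_eq_mul]
    simp only [inner_smul_left, inner_smul_right]
    rfl
  · intro n x v
    have := hpsd n (fun i => t⁻¹ • x i) v
    have h2 := mul_nonneg (abs_nonneg _ : 0 ≤ k) this
    have e : ∑ i, ∑ j, v i * v j * (k * C (t⁻¹ • (x i - x j))) =
        k * ∑ i, ∑ j, v i * v j * C (t⁻¹ • x i - t⁻¹ • x j) := by
      rw [Finset.mul_sum]
      refine Finset.sum_congr rfl fun i _ => ?_
      rw [Finset.mul_sum]
      refine Finset.sum_congr rfl fun j _ => ?_
      rw [smul_sub]; ring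
    exact e ▸ h2

lemma norm_compare {d : ℕ} (hd : 1 ≤ d) (l₁ l₂ : Fin d → ℝ) (h₁ : ∀ i, 0 < l₁ i) (h₂ : ∀ i, 0 < l₂ i)
    (heig : ∀ i j, l₂ j ≤ l₁ i) (b₁ b₂ : OrthonormalBasis (Fin d) ℝ (EE d)) (ω : EE d) :
    ∑ i, (l₁ i)⁻¹ * (b₁.repr ω i)^2 ≤ ∑ i, (l₂ i)⁻¹ * (b₂.repr ω i)^2 := by
  have : Nonempty (Fin d) := ⟨⟨0, hd⟩⟩
  obtain ⟨i₀, hi₀⟩ := Finite.exists_min l₁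
  have hn : ∀ b : OrthonormalBasis (Fin d) ℝ (EE d), ∑ i, (b.repr ω i)^2 = ‖ω‖^2 := by
    intro b
    rw [← b.repr.norm_map ω, EuclideanSpace.real_norm_sq_eq]
  calc ∑ i, (l₁ i)⁻¹ * (b₁.repr ω i)^2 ≤ ∑ i, (l₁ i₀)⁻¹ * (b₁.repr ω i)^2 := by
        refine Finset.sum_le_sum fun i _ => mul_le_mul_of_nonneg_right ?_ (sq_nonneg _)
        exact inv_anti₀ (h₁ i₀) (hi₀ i)
    _ = ∑ i, (l₁ i₀)⁻¹ * (b₂.repr ω i)^2 := by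
        rw [← Finset.mul_sum, ← Finset.mul_sum, hn, hn]
    _ ≤ ∑ i, (l₂ i)⁻¹ * (b₂.repr ω i)^2 := by
        refine Finset.sum_le_sum fun i _ => mul_le_mul_of_nonneg_right ?_ (sq_nonneg _)
        exact inv_anti₀ (h₂ i) (heig i₀ i)

lemma L_ne {d : ℕ} (l : Fin d → ℝ) (h : ∀ i, 0 < l i) 
    (b : OrthonormalBasis (Fin d) ℝ (EE d)) (ω : EE d) (hω : ω ≠ 0) (x : EE d)
    (hx : ‖x‖^2 = ∑ i, (l i)⁻¹ * (b.repr ω i)^2) : 0 < ‖x‖ := by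
  rw [norm_pos_iff]
  rintro rfl
  apply hω
  have h0 : ∑ i, (l i)⁻¹ * (b.repr ω i)^2 = 0 := by rw [← hx]; simp
  rw [Finset.sum_eq_zero_iff_of_nonneg
    (fun i _ => mul_nonneg (inv_nonneg.2 (h i).le) (sq_nonneg _))] at h0
  have : b.repr ω = 0 := by
    ext i
    have := h0 i (Finset.mem_univ i)
    have hi := (h i).ne'
    simpa [hi] using this
  simpa using this

lemma limit_part {d : ℕ} (hd : 1 ≤ d) (f : ℝ → ℝ)
    (hfpos : ∀ u : ℝ, 0 ≤ u → 0 < f u) (hfmono : AntitoneOn f (Set.Ici 0))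
    (L₁ L₂ : EE d →ₗ[ℝ] EE d) (hL₁ : ∀ ω, ω ≠ 0 → 0 < ‖L₁ ω‖) (hL₂ : ∀ ω, ω ≠ 0 → 0 < ‖L₂ ω‖)
    (c₁ c₂ : ℝ) (hi : Integrable (fun ω => c₁ * f ‖L₁ ω‖ - c₂ * f ‖L₂ ω‖))
    (hnn : ∀ t : ℝ, 0 < t → 0 ≤ ∫ ω, Real.exp (-‖ω‖^2) *
      (c₁ * f ‖L₁ (t • ω)‖ - c₂ * f ‖L₂ (t • ω)‖)) : c₂ ≤ c₁ := by
  have : Nonempty (Fin d) := ⟨⟨0, hd⟩⟩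
  have hbd : ∀ u, 0 ≤ u → f u ≤ f 0 := fun u hu => hfmono Set.self_mem_Ici hu hu
  have hbdd : BddAbove (f '' Set.Ioi 0) := ⟨f 0, by rintro _ ⟨u, hu, rfl⟩; exact hbd u (le_of_lt hu)⟩
  have hlim := (hfmono.mono Set.Ioi_subset_Ici_self).tendsto_nhdsGT hbdd
  set c := sSup (f '' Set.Ioi 0) with hcdef
  have hc : 0 < c := (hfpos 1 zero_le_one).trans_le (le_csSup hbdd ⟨1, by simp, rfl⟩)
  have hexp : Integrable (fun ω : EE d => Real.exp (-‖ω‖^2)) := by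
    have := (GaussianFourier.integrable_cexp_neg_mul_sq_norm_add (b := 1) (V := EE d) (by simp) 0 0).re
    refine this.congr (Filter.Eventually.of_forall fun ω => ?_)
    simp only [neg_mul, one_mul, zero_mul, add_zero]
    rw [← Complex.ofReal_pow, ← Complex.ofReal_neg, ← Complex.ofReal_exp]
    exact Complex.ofReal_re _
  have hexpv : 0 < ∫ ω : EE d, Real.exp (-‖ω‖^2) := by
    have := GaussianFourier.integral_rexp_neg_mul_sq_norm (V := EE d) (b := 1) one_pos
    simp only [neg_mul, one_mul] at this
    rw [this]; positivity
  let t : ℕ → ℝ := fun n => 1 / ((n : ℝ) + 1)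
  have ht : ∀ n, 0 < t n := fun n => by positivity
  have ht0 : Filter.Tendsto t Filter.atTop (nhds 0) := tendsto_one_div_add_atTop_nhds_zero_nat
  have hT : Filter.Tendsto (fun n => ∫ ω, Real.exp (-‖ω‖^2) *
      (c₁ * f ‖L₁ (t n • ω)‖ - c₂ * f ‖L₂ (t n • ω)‖)) Filter.atTop
      (nhds (∫ ω : EE d, Real.exp (-‖ω‖^2) * (c₁ * c - c₂ * c))) := by
    refine tendsto_integral_of_dominated_convergence
      (fun ω : EE d => Real.exp (-‖ω‖^2) * (|c₁| * f 0 + |c₂| * f 0)) ?_ (hexp.mul_const _) ?_ ?_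
    · intro n
      exact hexp.1.mul (hi.comp_smul (ht n).ne').1
    · intro n
      refine Filter.Eventually.of_forall fun ω => ?_
      rw [norm_mul, Real.norm_of_nonneg (Real.exp_pos _).le]
      refine mul_le_mul_of_nonneg_left ?_ (Real.exp_pos _).le
      refine (norm_sub_le _ _).trans (add_le_add ?_ ?_)
      · rw [norm_mul, Real.norm_of_nonneg (hfpos _ (norm_nonneg _)).le]
        exact mul_le_mul_of_nonneg_left (hbd _ (norm_nonneg _)) (norm_nonneg _)
      · rw [norm_mul, Real.norm_of_nonneg (hfpos _ (norm_nonneg _)).le]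
        exact mul_le_mul_of_nonneg_left (hbd _ (norm_nonneg _)) (norm_nonneg _)
    · have hae : ∀ᵐ ω : EE d, ω ≠ 0 := by
        simp [ae_iff]
      filter_upwards [hae] with ω hω
      have aux : ∀ L : EE d →ₗ[ℝ] EE d, 0 < ‖L ω‖ →
          Filter.Tendsto (fun n => f ‖L (t n • ω)‖) Filter.atTop (nhds c) := by
        intro L hL
        refine hlim.comp (tendsto_nhdsWithin_iff.2 ⟨?_, Filter.Eventually.of_forall fun n => ?_⟩)
        · have : (fun n => ‖L (t n • ω)‖) = fun n => t n * ‖L ω‖ := by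
            ext n; rw [map_smul, norm_smul, Real.norm_of_nonneg (ht n).le]
          rw [this]
          simpa using ht0.mul_const ‖L ω‖
        · rw [map_smul, norm_smul, Real.norm_of_nonneg (ht n).le]
          exact mul_pos (ht n) hL
      exact ((((aux L₁ (hL₁ ω hω)).const_mul c₁).sub ((aux L₂ (hL₂ ω hω)).const_mul c₂))).const_mul _
  have h0 := ge_of_tendsto' hT (fun n => hnn (t n) (ht n))
  rw [integral_mul_const] at h0
  have := nonneg_of_mul_nonneg_right h0 hexpv
  have h5 : 0 ≤ (c₁ - c₂) * c := by linarith
  have := nonneg_of_mul_nonneg_left h5 hc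
  linarith


theorem statement_2 (d : ℕ) (hd : 1 ≤ d) (φ f : ℝ → ℝ)
    (hφ : MemPhi d φ) (hf : IsRadialSpectralDensity d φ f)
    (hfpos : ∀ u : ℝ, 0 ≤ u → 0 < f u) (hfmono : AntitoneOn f (Set.Ici 0))
    (A₁ A₂ : Matrix (Fin d) (Fin d) ℝ) (hA₁ : A₁.PosDef) (hA₂ : A₂.PosDef)
    (heig : ∀ i j : Fin d, hA₂.1.eigenvalues j ≤ hA₁.1.eigenvalues i)
    (b₁ b₂ : ℝ) (hb₁ : 0 ≤ b₁) (hb₂ : 0 ≤ b₂) :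
    IsStationaryCovariance d
      (fun h => b₁ * φ (Real.sqrt (quadForm A₁ h)) - b₂ * φ (Real.sqrt (quadForm A₂ h))) ↔
    b₂ * Real.sqrt (∏ j : Fin d, hA₁.1.eigenvalues j / hA₂.1.eigenvalues j) ≤ b₁ := by
  have hl₁ := hA₁.eigenvalues_pos
  have hl₂ := hA₂.eigenvalues_pos
  obtain ⟨L₁, hn₁, hi₁, he₁⟩ := spectral φ f hf A₁ hA₁
  obtain ⟨L₂, hn₂, hi₂, he₂⟩ := spectral φ f hf A₂ hA₂
  have hP₁ : 0 < √ (∏ i, hA₁.1.eigenvalues i) := Real.sqrt_pos.2 (Finset.prod_pos fun i _ => hl₁ i)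
  have hP₂ : 0 < √ (∏ i, hA₂.1.eigenvalues i) := Real.sqrt_pos.2 (Finset.prod_pos fun i _ => hl₂ i)
  have hcond : b₂ * Real.sqrt (∏ j : Fin d, hA₁.1.eigenvalues j / hA₂.1.eigenvalues j) ≤ b₁ ↔
      b₂ * (√ (∏ i, hA₂.1.eigenvalues i))⁻¹ ≤ b₁ * (√ (∏ i, hA₁.1.eigenvalues i))⁻¹ := by
    rw [Finset.prod_div_distrib, Real.sqrt_div (Finset.prod_nonneg fun i _ => (hl₁ i).le),
      ← div_eq_mul_inv b₁, le_div_iff₀ hP₁]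
    have : b₂ * (√ (∏ i, hA₁.1.eigenvalues i) / √ (∏ i, hA₂.1.eigenvalues i)) =
       b₂ * (√ (∏ i, hA₂.1.eigenvalues i))⁻¹ * √ (∏ i, hA₁.1.eigenvalues i) := by
      rw [div_eq_mul_inv]; ring
    rw [this]
  rw [hcond]
  set P₁ := √ (∏ i, hA₁.1.eigenvalues i)
  set P₂ := √ (∏ i, hA₂.1.eigenvalues i)
  have hg : Integrable (fun ω => b₁ * P₁⁻¹ * f ‖L₁ ω‖ - b₂ * P₂⁻¹ * f ‖L₂ ω‖) :=
    (hi₁.const_mul _).sub (hi₂.const_mul _)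
  have hC : ∀ h, b₁ * φ (Real.sqrt (quadForm A₁ h)) - b₂ * φ (Real.sqrt (quadForm A₂ h)) =
      ∫ ω, Real.cos ⟪h, ω⟫ * (b₁ * P₁⁻¹ * f ‖L₁ ω‖ - b₂ * P₂⁻¹ * f ‖L₂ ω‖) := by
    intro h
    rw [he₁, he₂, ← integral_const_mul, ← integral_const_mul, ← integral_sub]
    · refine integral_congr_ae (Filter.Eventually.of_forall fun ω => ?_)
      simp only
      ring
    · exact (int_cos (hi₁.const_mul _) h).const_mul _
    · exact (int_cos (hi₂.const_mul _) h).const_mul _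
  constructor
  · intro hpsd
    exact limit_part hd f hfpos hfmono L₁ L₂
      (fun ω hω => L_ne _ hl₁ _ ω hω _ (hn₁ ω)) (fun ω hω => L_ne _ hl₂ _ ω hω _ (hn₂ ω)) _ _ hg
      (fun t ht => gauss_nonneg_scaled _ _ hg hC hpsd t ht)
  · intro hb
    refine psd_of_nonneg _ _ hg (fun ω => ?_) hC
    have hle : ‖L₁ ω‖ ≤ ‖L₂ ω‖ := by
      refine (sq_le_sq₀ (norm_nonneg _) (norm_nonneg _)).1 ?_
      rw [hn₁, hn₂]
      exact norm_compare hd _ _ hl₁ hl₂ heig _ _ ω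
    have hfle : f ‖L₂ ω‖ ≤ f ‖L₁ ω‖ := hfmono (norm_nonneg _) (norm_nonneg _) hle
    have h2 : 0 ≤ b₂ * P₂⁻¹ := by positivity
    have h3 := (hfpos _ (norm_nonneg (L₂ ω))).le
    exact sub_nonneg.2 (mul_le_mul hb hfle h3 (h2.trans hb))
end
end

section
/- Let d ≥ 1 and let φ ∈ Φ_d have a strictly positive nonincreasing d-radial spectral density f_d. Let a₁ ≥ a₂ > 0 and b₁, b₂ ≥ 0. Then the function h ↦ b₁ φ(√a₁ ‖h‖) − b₂ φ(√a₂ ‖h‖) is a stationary covariance function on ℝ^d if and only if b₁ ≥ b₂ (a₁/a₂)^{d/2}. -/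
open MeasureTheory
open scoped BigOperators RealInnerProductSpace

noncomputable section

open ProbabilityTheory Filter Topology

/-- `g` is a (possibly signed) spectral density of `C`. -/
def HasSpec (d : ℕ) (C g : EuclideanSpace ℝ (Fin d) → ℝ) : Prop :=
  Integrable g ∧ ∀ h, (C h : ℂ) = ∫ ω, Complex.exp (Complex.I * ((⟪h, ω⟫ : ℝ) : ℂ)) * (g ω : ℂ)

theorem norm_exp_I_mul (r : ℝ) : ‖Complex.exp (Complex.I * (r : ℂ))‖ = 1 := by
  rw [mul_comm]; exact Complex.norm_exp_ofReal_mul_I r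

theorem HasSpec.integrable {d : ℕ} {C g : EuclideanSpace ℝ (Fin d) → ℝ} (H : HasSpec d C g)
    (h : EuclideanSpace ℝ (Fin d)) :
    Integrable (fun ω => Complex.exp (Complex.I * ((⟪h, ω⟫ : ℝ) : ℂ)) * (g ω : ℂ)) := by
  refine H.1.ofReal.bdd_mul (c := 1) ?_ ?_
  · exact Continuous.aestronglyMeasurable (by fun_prop)
  · exact Filter.Eventually.of_forall fun ω => (norm_exp_I_mul _).le

theorem HasSpec.sub {d : ℕ} {C₁ g₁ C₂ g₂ : EuclideanSpace ℝ (Fin d) → ℝ} (H₁ : HasSpec d C₁ g₁)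
    (H₂ : HasSpec d C₂ g₂) (b₁ b₂ : ℝ) :
    HasSpec d (fun h => b₁ * C₁ h - b₂ * C₂ h) (fun ω => b₁ * g₁ ω - b₂ * g₂ ω) := by
  refine ⟨(H₁.1.const_mul b₁).sub (H₂.1.const_mul b₂), fun h => ?_⟩
  push_cast
  rw [H₁.2 h, H₂.2 h, ← integral_const_mul, ← integral_const_mul, ← integral_sub
    ((H₁.integrable h).const_mul _) ((H₂.integrable h).const_mul _)]
  congr 1; ext ω; ring

theorem HasSpec.bound {d : ℕ} {C g : EuclideanSpace ℝ (Fin d) → ℝ} (H : HasSpec d C g)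
    (h : EuclideanSpace ℝ (Fin d)) : ‖C h‖ ≤ ∫ ω, ‖g ω‖ := by
  have : ‖(C h : ℂ)‖ ≤ ∫ ω, ‖g ω‖ := by
    rw [H.2 h]
    refine (norm_integral_le_integral_norm _).trans (le_of_eq ?_)
    congr 1; ext ω
    rw [norm_mul, norm_exp_I_mul, one_mul, Complex.norm_real]
  simpa using this

theorem HasSpec.psd {d : ℕ} {C g : EuclideanSpace ℝ (Fin d) → ℝ} (H : HasSpec d C g)
    (hg : ∀ ω, 0 ≤ g ω) : IsStationaryCovariance d C := by
  intro n x v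
  have key : ((∑ i, ∑ j, v i * v j * C (x i - x j) : ℝ) : ℂ) =
      ((∫ ω, Complex.normSq (∑ i, (v i : ℂ) * Complex.exp (Complex.I * ((⟪x i, ω⟫ : ℝ) : ℂ)))
        * g ω : ℝ) : ℂ) := by
    rw [← integral_complex_ofReal]
    push_cast
    have : ∀ i j, (v i : ℂ) * v j * (C (x i - x j) : ℂ) = ∫ ω, (v i : ℂ) * v j *
        (Complex.exp (Complex.I * ((⟪x i - x j, ω⟫ : ℝ) : ℂ)) * (g ω : ℂ)) := by
      intro i j
      rw [H.2, integral_const_mul]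
    simp_rw [this]
    have hint : ∀ i j, Integrable (fun ω => (v i : ℂ) * v j *
        (Complex.exp (Complex.I * ((⟪x i - x j, ω⟫ : ℝ) : ℂ)) * (g ω : ℂ))) :=
      fun i j => (H.integrable _).const_mul _
    simp_rw [← integral_finsetSum _ (fun j _ => hint _ j)]
    rw [← integral_finsetSum _ (fun i _ => integrable_finsetSum _ (fun j _ => hint i j))]
    congr 1; ext ω
    rw [← Complex.mul_conj, map_sum, Finset.sum_mul_sum, Finset.sum_mul]
    refine Finset.sum_congr rfl fun i _ => ?_
    rw [Finset.sum_mul]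
    refine Finset.sum_congr rfl fun j _ => ?_
    rw [map_mul, ← Complex.exp_conj, map_mul, Complex.conj_I, Complex.conj_ofReal,
      Complex.conj_ofReal, inner_sub_left]
    have : Complex.exp (Complex.I * ((⟪x i, ω⟫ - ⟪x j, ω⟫ : ℝ) : ℂ)) =
        Complex.exp (Complex.I * ((⟪x i, ω⟫ : ℝ) : ℂ)) *
        Complex.exp (-Complex.I * ((⟪x j, ω⟫ : ℝ) : ℂ)) := by
      rw [← Complex.exp_add]; congr 1; push_cast; ring
    rw [this]; ring
  rw [Complex.ofReal_inj.mp key]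
  exact integral_nonneg fun ω => mul_nonneg (Complex.normSq_nonneg _) (hg ω)

theorem HasSpec.scale {d : ℕ} {φ f : ℝ → ℝ} (hf : IsRadialSpectralDensity d φ f)
    {s : ℝ} (hs : 0 < s) :
    HasSpec d (fun h => φ (s * ‖h‖)) (fun ω => (s ^ d)⁻¹ * f (s⁻¹ * ‖ω‖)) := by
  have hn : ∀ ω : EuclideanSpace ℝ (Fin d), s⁻¹ * ‖ω‖ = ‖s⁻¹ • ω‖ := fun ω => by
    rw [norm_smul, Real.norm_of_nonneg (inv_nonneg.2 hs.le)]
  constructor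
  · simp_rw [hn]
    exact (((integrable_comp_smul_iff volume
      (fun ω : EuclideanSpace ℝ (Fin d) => f ‖ω‖) (inv_ne_zero hs.ne')).2 hf.2.1)).const_mul _
  · intro h
    have h1 := hf.2.2 (s • h)
    rw [norm_smul, Real.norm_of_nonneg hs.le] at h1
    rw [h1]
    have h2 := Measure.integral_comp_inv_smul_of_nonneg volume
      (fun ω : EuclideanSpace ℝ (Fin d) =>
        Complex.exp (Complex.I * ((⟪s • h, ω⟫ : ℝ) : ℂ)) * ((f ‖ω‖ : ℝ) : ℂ)) hs.le
    rw [finrank_euclideanSpace_fin, Complex.real_smul] at h2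
    have hsd : ((s ^ d : ℝ) : ℂ) ≠ 0 := by exact_mod_cast (pow_pos hs d).ne'
    rw [← mul_right_inj' hsd, ← h2, ← integral_const_mul]
    congr 1; ext ω
    have : ⟪s • h, s⁻¹ • ω⟫ = ⟪h, ω⟫ := by
      rw [real_inner_smul_left, real_inner_smul_right, mul_inv_cancel_left₀ hs.ne']
    simp only [this, hn]
    push_cast at hsd ⊢
    field_simp

/-- Monte Carlo argument. -/
theorem psd_integral {d : ℕ} {C : EuclideanSpace ℝ (Fin d) → ℝ} (hC : IsStationaryCovariance d C)
    (hm : Measurable C) {K : ℝ} (hK : ∀ h, ‖C h‖ ≤ K)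
    (μ : Measure (EuclideanSpace ℝ (Fin d))) [IsProbabilityMeasure μ] :
    0 ≤ ∫ p, C (p.1 - p.2) ∂(μ.prod μ) := by
  set M := ∫ p, C (p.1 - p.2) ∂(μ.prod μ) with hM
  have step : ∀ n : ℕ, 0 ≤ (n : ℝ) * C 0 + n * (n - 1) * M := by
    intro n
    let P := Measure.pi (fun _ : Fin n => μ)
    have hint : ∀ i j : Fin n, Integrable (fun x : Fin n → EuclideanSpace ℝ (Fin d) =>
        C (x i - x j)) P := by
      intro i j
      refine Integrable.of_bound (C := K) ?_ (Eventually.of_forall fun x => hK _)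
      exact (hm.comp (by fun_prop)).aestronglyMeasurable
    have h0 : 0 ≤ ∫ x, ∑ i, ∑ j, C (x i - x j) ∂P := by
      refine integral_nonneg fun x => ?_
      simpa using hC n x (fun _ => 1)
    rw [integral_finsetSum _ (fun i _ => integrable_finsetSum _ (fun j _ => hint i j))] at h0
    simp_rw [integral_finsetSum _ (fun j _ => hint _ j)] at h0
    have hval : ∀ i j : Fin n, ∫ x, C (x i - x j) ∂P = if i = j then C 0 else M := by
      intro i j
      split_ifs with hij
      · subst hij; simp [P]
      · have hind : IndepFun (fun x : Fin n → EuclideanSpace ℝ (Fin d) => x i)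
            (fun x => x j) P :=
          (iIndepFun_pi (μ := fun _ : Fin n => μ) (X := fun _ x => x)
            (fun _ => aemeasurable_id)).indepFun hij
        rw [indepFun_iff_map_prod_eq_prod_map_map (measurable_pi_apply i).aemeasurable
          (measurable_pi_apply j).aemeasurable] at hind
        have e1 : ∀ k, P.map (fun x => x k) = μ := fun k =>
          (measurePreserving_eval (fun _ : Fin n => μ) k).map_eq
        rw [e1, e1] at hind
        rw [hM, ← hind, integral_map (φ := fun x : Fin n → EuclideanSpace ℝ (Fin d) => (x i, x j))
          (f := fun p : EuclideanSpace ℝ (Fin d) × EuclideanSpace ℝ (Fin d) => C (p.1 - p.2))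
          ((measurable_pi_apply i).prodMk (measurable_pi_apply j)).aemeasurable
          (hm.comp (measurable_fst.sub measurable_snd)).aestronglyMeasurable]
    simp_rw [hval] at h0
    have : ∀ i j : Fin n, (if i = j then C 0 else M) = (if i = j then C 0 - M else 0) + M := by
      intro i j; split_ifs <;> ring
    simp_rw [this, Finset.sum_add_distrib] at h0
    simp at h0
    linarith
  by_contra hneg
  push Not at hneg
  obtain ⟨n, hn⟩ := exists_nat_gt (C 0 / (-M) + 1)
  have h1 : C 0 < (n - 1) * (-M) := by
    rw [← div_lt_iff₀ (by linarith)]; linarith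
  have h2 := step n
  have h3 := step 1
  simp at h3
  have hnpos : (0:ℝ) < n := by
    have : 0 ≤ C 0 / (-M) := div_nonneg h3 (by linarith)
    linarith
  nlinarith [mul_lt_mul_of_pos_left h1 hnpos]

theorem HasSpec.gauss {d : ℕ} {C g : EuclideanSpace ℝ (Fin d) → ℝ} (H : HasSpec d C g) :
    ∫ p, C (p.1 - p.2) ∂((stdGaussian (EuclideanSpace ℝ (Fin d))).prod
      (stdGaussian (EuclideanSpace ℝ (Fin d)))) = ∫ ω, Real.exp (-‖ω‖ ^ 2) * g ω := by
  set μ := stdGaussian (EuclideanSpace ℝ (Fin d)) with hμ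
  rw [← Complex.ofReal_inj, ← integral_complex_ofReal, ← integral_complex_ofReal]
  simp_rw [H.2]
  rw [integral_integral_swap]
  · congr 1; ext ω
    rw [integral_mul_const]
    have : ∀ p : EuclideanSpace ℝ (Fin d) × EuclideanSpace ℝ (Fin d),
        Complex.exp (Complex.I * ((⟪p.1 - p.2, ω⟫ : ℝ) : ℂ)) =
        Complex.exp (((⟪p.1, ω⟫ : ℝ) : ℂ) * Complex.I) *
        Complex.exp (((⟪p.2, -ω⟫ : ℝ) : ℂ) * Complex.I) := by
      intro p
      rw [← Complex.exp_add, inner_sub_left, inner_neg_right]; congr 1; push_cast; ring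
    simp_rw [this]
    rw [integral_prod_mul (fun x : EuclideanSpace ℝ (Fin d) =>
      Complex.exp (((⟪x, ω⟫ : ℝ) : ℂ) * Complex.I)) (fun x : EuclideanSpace ℝ (Fin d) =>
      Complex.exp (((⟪x, -ω⟫ : ℝ) : ℂ) * Complex.I)), ← charFun_apply, ← charFun_apply, hμ,
      charFun_stdGaussian, charFun_stdGaussian, ← Complex.exp_add, norm_neg]
    push_cast
    congr 2; ring
  · have h1 : Integrable (fun q : (EuclideanSpace ℝ (Fin d) × EuclideanSpace ℝ (Fin d)) ×
        EuclideanSpace ℝ (Fin d) => (g q.2 : ℂ)) ((μ.prod μ).prod volume) :=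
      (H.1.ofReal (𝕜 := ℂ)).comp_snd (μ.prod μ)
    refine h1.bdd_mul (c := 1) ?_ ?_
    · exact Continuous.aestronglyMeasurable (by fun_prop)
    · exact Filter.Eventually.of_forall fun ω => (norm_exp_I_mul _).le

theorem gauss_pos (d : ℕ) : 0 < ∫ ω : EuclideanSpace ℝ (Fin d), Real.exp (-‖ω‖ ^ 2) := by
  have := GaussianFourier.integral_rexp_neg_mul_sq_norm (V := EuclideanSpace ℝ (Fin d))
    (b := 1) one_pos
  simp only [neg_mul, one_mul] at this
  rw [this]; positivity

theorem gauss_integrable (d : ℕ) :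
    Integrable fun ω : EuclideanSpace ℝ (Fin d) => Real.exp (-‖ω‖ ^ 2) := by
  by_contra h
  exact (gauss_pos d).ne' (integral_undef h)

theorem limit_J {d : ℕ} (hd : 1 ≤ d) {φ f : ℝ → ℝ} (hf : IsRadialSpectralDensity d φ f)
    (hfpos : ∀ u : ℝ, 0 ≤ u → 0 < f u) (hfmono : AntitoneOn f (Set.Ici 0)) :
    ∃ L, 0 < L ∧ Tendsto (fun s : ℝ => ∫ ω : EuclideanSpace ℝ (Fin d),
      Real.exp (-‖ω‖ ^ 2) * f (s⁻¹ * ‖ω‖)) atTop (𝓝 L) := by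
  have hbdd : BddAbove (f '' Set.Ioi 0) := by
    refine ⟨f 0, ?_⟩
    rintro _ ⟨u, hu, rfl⟩
    exact hfmono Set.self_mem_Ici (Set.mem_Ici.2 (Set.mem_Ioi.1 hu).le) (Set.mem_Ioi.1 hu).le
  have hlim := (hfmono.mono Set.Ioi_subset_Ici_self).tendsto_nhdsGT hbdd
  set l := sSup (f '' Set.Ioi 0)
  have hl : 0 < l := (hfpos 1 zero_le_one).trans_le
    (le_csSup hbdd ⟨1, Set.mem_Ioi.2 one_pos, rfl⟩)
  refine ⟨∫ ω : EuclideanSpace ℝ (Fin d), Real.exp (-‖ω‖ ^ 2) * l, ?_, ?_⟩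
  · rw [integral_mul_const]; exact mul_pos (gauss_pos d) hl
  have : Nonempty (Fin d) := ⟨⟨0, hd⟩⟩
  refine tendsto_integral_filter_of_dominated_convergence
    (fun ω => Real.exp (-‖ω‖ ^ 2) * f 0) ?_ ?_ ((gauss_integrable d).mul_const _) ?_
  · filter_upwards [eventually_gt_atTop 0] with s hs
    refine AEStronglyMeasurable.mul (Continuous.aestronglyMeasurable (by fun_prop)) ?_
    have h1 := ((HasSpec.scale hf hs).1.const_mul (s ^ d)).aestronglyMeasurable
    refine h1.congr (Eventually.of_forall fun ω => ?_)
    have := (pow_pos hs d).ne'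
    simp only
    field_simp
  · filter_upwards [eventually_gt_atTop 0] with s hs
    refine Eventually.of_forall fun ω => ?_
    have h0 : 0 ≤ s⁻¹ * ‖ω‖ := by positivity
    rw [norm_mul, Real.norm_of_nonneg (Real.exp_pos _).le, Real.norm_of_nonneg (hfpos _ h0).le]
    exact mul_le_mul_of_nonneg_left (hfmono Set.self_mem_Ici h0 h0) (Real.exp_pos _).le
  · have hne : ∀ᵐ ω : EuclideanSpace ℝ (Fin d), ω ≠ 0 := by
      simp [ae_iff]
    filter_upwards [hne] with ω hω
    refine Tendsto.const_mul _ (hlim.comp ?_)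
    have hpos : 0 < ‖ω‖ := norm_pos_iff.2 hω
    refine tendsto_nhdsWithin_iff.2 ⟨?_, ?_⟩
    · simpa using tendsto_inv_atTop_zero.mul_const ‖ω‖
    · filter_upwards [eventually_gt_atTop 0] with s hs
      exact mul_pos (inv_pos.2 hs) hpos

theorem cond_iff {d : ℕ} {a₁ a₂ b₁ b₂ : ℝ} (ha₂ : 0 < a₂) (ha₁ : 0 < a₁) :
    b₂ * (a₁ / a₂) ^ ((d : ℝ) / 2) ≤ b₁ ↔
    b₂ * (Real.sqrt a₂ ^ d)⁻¹ ≤ b₁ * (Real.sqrt a₁ ^ d)⁻¹ := by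
  have h : (a₁ / a₂) ^ ((d : ℝ) / 2) = Real.sqrt a₁ ^ d / Real.sqrt a₂ ^ d := by
    rw [← div_pow, ← Real.sqrt_div ha₁.le, Real.sqrt_eq_rpow, ← Real.rpow_natCast,
      ← Real.rpow_mul (by positivity)]
    congr 1; ring
  have h1 : 0 < Real.sqrt a₁ ^ d := by positivity
  rw [h, ← div_eq_mul_inv b₁, le_div_iff₀ h1]
  rw [show b₂ * (Real.sqrt a₁ ^ d / Real.sqrt a₂ ^ d) =
    b₂ * (Real.sqrt a₂ ^ d)⁻¹ * Real.sqrt a₁ ^ d by ring]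

theorem statement_6 (d : ℕ) (hd : 1 ≤ d) (φ f : ℝ → ℝ)
    (hφ : MemPhi d φ) (hf : IsRadialSpectralDensity d φ f)
    (hfpos : ∀ u : ℝ, 0 ≤ u → 0 < f u) (hfmono : AntitoneOn f (Set.Ici 0))
    (a₁ a₂ b₁ b₂ : ℝ) (ha₂ : 0 < a₂) (ha : a₂ ≤ a₁) (hb₁ : 0 ≤ b₁) (hb₂ : 0 ≤ b₂) :
    IsStationaryCovariance d
      (fun h => b₁ * φ (Real.sqrt a₁ * ‖h‖) - b₂ * φ (Real.sqrt a₂ * ‖h‖)) ↔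
    b₂ * (a₁ / a₂) ^ ((d : ℝ) / 2) ≤ b₁ := by
  have ha₁ : 0 < a₁ := ha₂.trans_le ha
  have hs₁ : 0 < Real.sqrt a₁ := Real.sqrt_pos.2 ha₁
  have hs₂ : 0 < Real.sqrt a₂ := Real.sqrt_pos.2 ha₂
  have hss : Real.sqrt a₂ ≤ Real.sqrt a₁ := Real.sqrt_le_sqrt ha
  rw [cond_iff ha₂ ha₁]
  constructor
  · intro hC
    obtain ⟨L, hL, hlim⟩ := limit_J hd hf hfpos hfmono
    have hφm : Continuous (fun h : EuclideanSpace ℝ (Fin d) => φ ‖h‖) :=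
      hφ.1.comp_continuous continuous_norm (fun h => norm_nonneg h)
    have hl : ∀ s : ℝ, 0 < s → Tendsto (fun t : ℝ => ∫ ω : EuclideanSpace ℝ (Fin d),
        Real.exp (-‖ω‖ ^ 2) * f ((t * s)⁻¹ * ‖ω‖)) atTop (𝓝 L) := fun s hs =>
      hlim.comp (tendsto_id.atTop_mul_const hs)
    have h1 := (hl _ hs₁).const_mul (b₁ * (Real.sqrt a₁ ^ d)⁻¹)
    have h2 := (hl _ hs₂).const_mul (b₂ * (Real.sqrt a₂ ^ d)⁻¹)
    refine le_of_mul_le_mul_right (le_of_tendsto_of_tendsto h2 h1 ?_) hL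
    filter_upwards [eventually_gt_atTop 0] with t ht
    have H₁ := HasSpec.scale hf (mul_pos ht hs₁)
    have H₂ := HasSpec.scale hf (mul_pos ht hs₂)
    have H := H₁.sub H₂ b₁ b₂
    have hpsd : IsStationaryCovariance d (fun h => b₁ * φ (t * Real.sqrt a₁ * ‖h‖) -
        b₂ * φ (t * Real.sqrt a₂ * ‖h‖)) := by
      intro n x v
      have := hC n (fun i => t • x i) v
      simp only [← smul_sub, norm_smul, Real.norm_of_nonneg ht.le] at this
      have e : ∀ r y : ℝ, r * (t * y) = t * r * y := fun r y => by ring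
      simpa only [e] using this
    have hcont : ∀ s : ℝ, 0 < s →
        Continuous (fun h : EuclideanSpace ℝ (Fin d) => φ (s * ‖h‖)) := fun s hs =>
      hφ.1.comp_continuous (by fun_prop) (fun h => mul_nonneg hs.le (norm_nonneg h))
    have hmeas : Measurable (fun h : EuclideanSpace ℝ (Fin d) =>
        b₁ * φ (t * Real.sqrt a₁ * ‖h‖) - b₂ * φ (t * Real.sqrt a₂ * ‖h‖)) :=
      (((hcont _ (mul_pos ht hs₁)).const_mul b₁).sub
        ((hcont _ (mul_pos ht hs₂)).const_mul b₂)).measurable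
    have h0 := psd_integral hpsd hmeas H.bound (stdGaussian (EuclideanSpace ℝ (Fin d)))
    rw [H.gauss] at h0
    have hbi : ∀ g : EuclideanSpace ℝ (Fin d) → ℝ, Integrable g →
        Integrable (fun ω => Real.exp (-‖ω‖ ^ 2) * g ω) := fun g hg =>
      hg.bdd_mul (c := 1) (Continuous.aestronglyMeasurable (by fun_prop))
        (Eventually.of_forall fun ω => by
          rw [Real.norm_of_nonneg (Real.exp_pos _).le, Real.exp_le_one_iff]
          simp)
    have e : ∀ ω : EuclideanSpace ℝ (Fin d), Real.exp (-‖ω‖ ^ 2) *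
        (b₁ * (((t * Real.sqrt a₁) ^ d)⁻¹ * f ((t * Real.sqrt a₁)⁻¹ * ‖ω‖)) -
        b₂ * (((t * Real.sqrt a₂) ^ d)⁻¹ * f ((t * Real.sqrt a₂)⁻¹ * ‖ω‖))) =
        b₁ * (Real.exp (-‖ω‖ ^ 2) * (((t * Real.sqrt a₁) ^ d)⁻¹ * f ((t * Real.sqrt a₁)⁻¹ * ‖ω‖)))
        - b₂ * (Real.exp (-‖ω‖ ^ 2) *
          (((t * Real.sqrt a₂) ^ d)⁻¹ * f ((t * Real.sqrt a₂)⁻¹ * ‖ω‖))) := fun ω => by ring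
    simp_rw [e] at h0
    rw [integral_sub ((hbi _ H₁.1).const_mul _) ((hbi _ H₂.1).const_mul _)] at h0
    simp_rw [integral_const_mul, mul_left_comm (Real.exp _), integral_const_mul, mul_pow,
      mul_inv (t ^ d)] at h0
    have htd : 0 < (t ^ d)⁻¹ := by positivity
    refine le_of_mul_le_mul_left ?_ htd
    linarith
  · intro hb
    refine ((HasSpec.scale hf hs₁).sub (HasSpec.scale hf hs₂) b₁ b₂).psd fun ω => ?_
    have hn := norm_nonneg ω
    have i1 : 0 ≤ (Real.sqrt a₁)⁻¹ * ‖ω‖ := by positivity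
    have i2 : 0 ≤ (Real.sqrt a₂)⁻¹ * ‖ω‖ := by positivity
    have hff : f ((Real.sqrt a₂)⁻¹ * ‖ω‖) ≤ f ((Real.sqrt a₁)⁻¹ * ‖ω‖) :=
      hfmono i1 i2 (mul_le_mul_of_nonneg_right (inv_anti₀ hs₂ hss) hn)
    have := mul_le_mul hb hff (hfpos _ i2).le (by positivity)
    linarith
end
end

section
/- Let d ∈ {1, 2, 3}. Let a₁, a₂ > 0 and b₁, b₂ ≥ 0 be constants and u a unit vector in ℝ^d. Define W(t) = sin(t)/t for t > 0 and W(0) = 1, with W'(t) = (t cos t − sin t)/t² and W''(t) = (−t² sin t − 2t cos t + 2 sin t)/t³ for t > 0 and W''(0) = −1/3. Then the function T : ℝ^d → ℝ defined by T(h) = b₁ W(√a₁ ‖h‖) − b₂ [ cos²θ(h,u) · W''(√a₂ ‖h‖) + sin²θ(h,u) · W'(√a₂ ‖h‖)/(√a₂ ‖h‖) ] for h ≠ 0, and T(0) = b₁ + b₂/3, is a stationary covariance function on ℝ^d. -/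
open MeasureTheory
open scoped BigOperators RealInnerProductSpace

noncomputable section

abbrev E3 := WithLp 2 (ℝ × ℂ)

lemma inner_slice (R z g : ℝ) (hR : 0 < R) :
    ∫ c : ℂ, Set.indicator {p : ℝ × ℂ | p.1 ^ 2 + ‖p.2‖ ^ 2 < R ^ 2} (fun _ => g) (z, c)
      = g * (Real.pi * Real.sqrt (R ^ 2 - z ^ 2) ^ 2) := by
  have h1 : (fun c : ℂ => Set.indicator {p : ℝ × ℂ | p.1 ^ 2 + ‖p.2‖ ^ 2 < R ^ 2} (fun _ => g) (z, c))
      = Set.indicator (Metric.ball (0:ℂ) (Real.sqrt (R ^ 2 - z ^ 2))) (fun _ => g) := by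
    funext c
    simp only [Set.indicator_apply]
    congr 1
    simp only [Set.mem_ofPred_eq, Metric.mem_ball, dist_zero_right, eq_iff_iff]
    rw [Real.lt_sqrt (norm_nonneg c)]
    constructor <;> intro h <;> linarith
  rw [h1, integral_indicator Metric.isOpen_ball.measurableSet]
  rw [setIntegral_const, smul_eq_mul, mul_comm, Measure.real, Complex.volume_ball]
  congr 1
  rw [ENNReal.toReal_mul, ENNReal.toReal_pow, ENNReal.toReal_ofReal (Real.sqrt_nonneg _), mul_comm]
  simp

lemma ball_rot (R : ℝ) (h : E3) :
    ∫ y in Metric.ball (0:E3) R, Real.cos ⟪h, y⟫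
      = ∫ y in Metric.ball (0:E3) R, Real.cos (‖h‖ * y.ofLp.1) := by
  set w : E3 := WithLp.toLp 2 (‖h‖, 0) with hw
  have hn : ‖h‖ = ‖w‖ := by
    rw [WithLp.prod_norm_eq_of_L2 w]
    simp [hw]
  have hf := Submodule.reflection_sub hn
  set f := (Submodule.span ℝ {h - w})ᗮ.reflection with hfd
  have hp := f.measurePreserving.setIntegral_preimage_emb
    f.toHomeomorph.measurableEmbedding (fun y => Real.cos ⟪w, y⟫) (Metric.ball 0 R)
  have hpre : f ⁻¹' (Metric.ball 0 R) = Metric.ball (0:E3) R := by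
    ext y; simp
  rw [hpre] at hp
  have e1 : ∀ y, ⟪w, f y⟫ = ⟪h, y⟫ := by
    intro y; rw [← hf, f.inner_map_map]
  simp only [e1] at hp
  rw [hp]
  congr 1
  funext y
  simp [hw, WithLp.prod_inner_apply, mul_comm]

lemma ball_formula (R : ℝ) (hR : 0 < R) (h : E3) :
    ∫ y in Metric.ball (0:E3) R, Real.cos ⟪h, y⟫
      = ∫ z in (-R)..R, Real.cos (‖h‖ * z) * (Real.pi * (R ^ 2 - z ^ 2)) := by
  rw [ball_rot]
  set S : Set (ℝ × ℂ) := {p : ℝ × ℂ | p.1 ^ 2 + ‖p.2‖ ^ 2 < R ^ 2} with hS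
  have hSm : IsOpen S := isOpen_lt (by fun_prop) (by fun_prop)
  have hp := (WithLp.volume_preserving_ofLp ℝ ℂ).setIntegral_preimage_emb
    (MeasurableEquiv.toLp 2 (ℝ × ℂ)).symm.measurableEmbedding
    (fun p => Real.cos (‖h‖ * p.1)) S
  have hpre : (@WithLp.ofLp 2 (ℝ × ℂ)) ⁻¹' S = Metric.ball (0:E3) R := by
    ext y
    simp only [hS, Set.mem_preimage, Set.mem_ofPred_eq, Metric.mem_ball, dist_zero_right]
    rw [WithLp.prod_norm_eq_of_L2, Real.sqrt_lt' hR]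
    simp
  rw [hpre] at hp
  rw [hp, ← integral_indicator hSm.measurableSet]
  have hfin : volume S < ⊤ := by
    have := (WithLp.volume_preserving_ofLp ℝ ℂ).measure_preimage hSm.measurableSet.nullMeasurableSet
    rw [← this, hpre]
    exact measure_ball_lt_top
  have hint : Integrable (S.indicator fun p : ℝ × ℂ => Real.cos (‖h‖ * p.1)) (volume.prod volume) := by
    rw [integrable_indicator_iff hSm.measurableSet]
    refine Measure.integrableOn_of_bounded (M := 1) hfin.ne ?_ ?_
    · exact Continuous.aestronglyMeasurable (by fun_prop)
    · exact Filter.Eventually.of_forall fun p => by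
        simpa using Real.abs_cos_le_one _
  rw [Measure.volume_eq_prod, integral_prod _ hint]
  have h2 : ∀ z : ℝ, ∫ c : ℂ, S.indicator (fun p : ℝ × ℂ => Real.cos (‖h‖ * p.1)) (z, c)
      = Real.cos (‖h‖ * z) * (Real.pi * Real.sqrt (R ^ 2 - z ^ 2) ^ 2) := by
    intro z
    rw [← inner_slice R z _ hR]
    rfl
  simp only [h2]
  rw [intervalIntegral.integral_of_le (by linarith), ← integral_indicator measurableSet_Ioc]
  congr 1
  funext z
  rw [Set.indicator_apply]
  split_ifs with hz
  · rw [Real.sq_sqrt]; nlinarith [hz.1, hz.2]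
  · rw [Real.sqrt_eq_zero_of_nonpos]
    · simp
    · simp only [Set.mem_Ioc, not_and_or, not_lt, not_le] at hz
      rcases hz with hz | hz <;> nlinarith

lemma hasDeriv_sym (c : ℝ → ℝ) (hc : Continuous c) (hev : ∀ x, c (-x) = c x) :
    HasDerivAt (fun R : ℝ => ∫ z in (-R)..R, c z) (2 * c 1) 1 := by
  have h1 : ∀ x, HasDerivAt (fun R : ℝ => ∫ z in (0:ℝ)..R, c z) (c x) x := fun x =>
    intervalIntegral.integral_hasDerivAt_right (hc.intervalIntegrable _ _)
      hc.stronglyMeasurable.stronglyMeasurableAtFilter hc.continuousAt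
  have h2 := (h1 1).sub ((h1 (-1)).comp 1 (hasDerivAt_neg (1:ℝ)))
  refine (h2.congr_deriv (by rw [hev]; ring)).congr_of_eventuallyEq ?_
  refine Filter.Eventually.of_forall fun R => ?_
  simp only [Pi.sub_apply, Function.comp]
  exact (intervalIntegral.integral_interval_sub_left (hc.intervalIntegrable _ _)
    (hc.intervalIntegrable _ _)).symm

lemma hasDeriv_formula (s : ℝ) :
    HasDerivAt (fun R : ℝ => ∫ z in (-R)..R, Real.cos (s * z) * (Real.pi * (R ^ 2 - z ^ 2)))
      (4 * Real.pi * Real.sinc s) 1 := by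
  have h1 := hasDeriv_sym (fun z => Real.cos (s * z)) (by fun_prop) (by intro x; simp)
  have h2 := hasDeriv_sym (fun z => z ^ 2 * Real.cos (s * z)) (by fun_prop) (by intro x; simp)
  have h3 := (((hasDerivAt_pow 2 (1:ℝ)).mul h1).sub h2).const_mul Real.pi
  have hs : ∫ z in (-1:ℝ)..1, Real.cos (s * z) = 2 * Real.sinc s := by
    by_cases h0 : s = 0
    · subst h0; simp; norm_num
    · rw [intervalIntegral.integral_comp_mul_left _ h0, Real.sinc_of_ne_zero h0]
      simp; field_simp; ring
  refine (h3.congr_deriv ?_).congr_of_eventuallyEq ?_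
  · rw [hs]; simp; ring
  · refine Filter.Eventually.of_forall fun R => ?_
    simp only [Pi.sub_apply, Pi.mul_apply]
    rw [← intervalIntegral.integral_const_mul, ← intervalIntegral.integral_sub,
      ← intervalIntegral.integral_const_mul]
    · congr 1; funext z; ring
    all_goals exact Continuous.intervalIntegrable (by fun_prop) _ _

lemma psd_cos {ι : Type*} [Fintype ι] (x v : ι → ℝ) :
    ∑ i, ∑ j, v i * v j * Real.cos (x i - x j)
      = (∑ i, v i * Real.cos (x i)) ^ 2 + (∑ i, v i * Real.sin (x i)) ^ 2 := by
  rw [sq, sq, Finset.sum_mul_sum, Finset.sum_mul_sum, ← Finset.sum_add_distrib]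
  refine Finset.sum_congr rfl fun i _ => ?_
  rw [← Finset.sum_add_distrib]
  refine Finset.sum_congr rfl fun j _ => ?_
  rw [Real.cos_sub]; ring

lemma psd_E3 {ι : Type*} [Fintype ι] (x : ι → E3) (v : ι → ℝ) :
    0 ≤ ∑ i, ∑ j, v i * v j * Real.sinc ‖x i - x j‖ := by
  have hI : ∀ (R : ℝ) (h : E3), IntegrableOn (fun y => Real.cos ⟪h, y⟫) (Metric.ball (0:E3) R) := by
    intro R h
    refine Measure.integrableOn_of_bounded (M := 1) measure_ball_lt_top.ne ?_ ?_
    · exact Continuous.aestronglyMeasurable (by fun_prop)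
    · exact Filter.Eventually.of_forall fun p => by
        simpa using Real.abs_cos_le_one _
  set F : E3 → ℝ := fun y => ∑ i, ∑ j, v i * v j * Real.cos ⟪x i - x j, y⟫ with hF
  have hFn : ∀ y, 0 ≤ F y := by
    intro y
    have := psd_cos (fun i => ⟪x i, y⟫) v
    simp only [hF, inner_sub_left]
    rw [this]; positivity
  have hFI : ∀ R, IntegrableOn F (Metric.ball (0:E3) R) := by
    intro R
    refine integrable_finsetSum _ fun i _ => integrable_finsetSum _ fun j _ => ?_
    exact (hI R _).const_mul _
  set Q : ℝ → ℝ := fun R => ∫ y in Metric.ball (0:E3) R, F y with hQ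
  have hmono : Monotone Q := by
    intro R R' h
    exact setIntegral_mono_set (hFI R') (Filter.Eventually.of_forall hFn)
      (Metric.ball_subset_ball h).eventuallyLE
  have hQe : ∀ R, Q R = ∑ i, ∑ j, v i * v j *
      ∫ y in Metric.ball (0:E3) R, Real.cos ⟪x i - x j, y⟫ := by
    intro R
    simp only [hQ, hF]
    rw [integral_finsetSum _ fun i _ => integrable_finsetSum _ fun j _ => (hI R _).const_mul _]
    refine Finset.sum_congr rfl fun i _ => ?_
    rw [integral_finsetSum _ fun j _ => (hI R _).const_mul _]
    refine Finset.sum_congr rfl fun j _ => ?_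
    rw [integral_const_mul]
  have hd : HasDerivAt Q (∑ i, ∑ j, v i * v j * (4 * Real.pi * Real.sinc ‖x i - x j‖)) 1 := by
    have : HasDerivAt (fun R => ∑ i, ∑ j, v i * v j *
        ∫ z in (-R)..R, Real.cos (‖x i - x j‖ * z) * (Real.pi * (R ^ 2 - z ^ 2)))
        (∑ i, ∑ j, v i * v j * (4 * Real.pi * Real.sinc ‖x i - x j‖)) 1 := by
      refine HasDerivAt.fun_sum fun i _ => HasDerivAt.fun_sum fun j _ => ?_
      exact (hasDeriv_formula _).const_mul _
    refine this.congr_of_eventuallyEq ?_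
    filter_upwards [lt_mem_nhds (show (0:ℝ) < 1 by norm_num)] with R hR
    rw [hQe]
    simp only [ball_formula R hR]
  have h0 : 0 ≤ deriv Q 1 := hmono.deriv_nonneg
  rw [hd.deriv] at h0
  have h1 : ∑ i, ∑ j, v i * v j * (4 * Real.pi * Real.sinc ‖x i - x j‖)
      = (4 * Real.pi) * ∑ i, ∑ j, v i * v j * Real.sinc ‖x i - x j‖ := by
    simp only [Finset.mul_sum]
    refine Finset.sum_congr rfl fun i _ => Finset.sum_congr rfl fun j _ => ?_
    ring
  rw [h1] at h0
  exact nonneg_of_mul_nonneg_right h0 (by positivity)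

lemma exists_isom (d : ℕ) (hd : d ≤ 3) : Nonempty (EuclideanSpace ℝ (Fin d) →ₗᵢ[ℝ] E3) := by
  have hfr : Module.finrank ℝ E3 = 3 := by
    rw [(WithLp.linearEquiv 2 ℝ (ℝ × ℂ)).finrank_eq]
    simp [Complex.finrank_real_complex]
  let b := (stdOrthonormalBasis ℝ E3).reindex (finCongr hfr)
  let c := EuclideanSpace.basisFun (Fin d) ℝ
  refine ⟨(c.toBasis.constr ℝ (b ∘ Fin.castLE hd)).isometryOfOrthonormal (v := c.toBasis) ?_ ?_⟩
  · simpa using c.orthonormal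
  · have : (c.toBasis.constr ℝ (b ∘ Fin.castLE hd)) ∘ c.toBasis = b ∘ Fin.castLE hd := by
      funext i; simp only [Function.comp]; rw [Module.Basis.constr_basis]; rfl
    rw [this]
    exact b.orthonormal.comp _ (Fin.castLE_injective hd)

lemma psd_sinc {ι : Type*} [Fintype ι] (d : ℕ) (hd : d ≤ 3) (x : ι → EuclideanSpace ℝ (Fin d))
    (v : ι → ℝ) : 0 ≤ ∑ i, ∑ j, v i * v j * Real.sinc ‖x i - x j‖ := by
  obtain ⟨L⟩ := exists_isom d hd
  have := psd_E3 (fun i => L (x i)) v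
  simpa only [← map_sub, L.norm_map] using this

lemma second_diff (g g' : ℝ → ℝ) (g'' : ℝ) (h1 : ∀ᶠ t in nhds 0, HasDerivAt g (g' t) t)
    (h2 : HasDerivAt g' g'' 0) :
    Filter.Tendsto (fun t => (2 * g 0 - g t - g (-t)) / t ^ 2) (nhdsWithin 0 {0}ᶜ) (nhds (-g'')) := by
  have hneg : Filter.Tendsto (fun t : ℝ => -t) (nhds 0) (nhds 0) := by
    simpa using (continuous_neg.tendsto (0:ℝ))
  have h1n := hneg.eventually h1
  have hg0 : ContinuousAt g 0 := h1.self_of_nhds.continuousAt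
  refine HasDerivAt.lhopital_zero_nhdsNE (f' := fun t => - g' t + g' (-t)) (g' := fun t => 2 * t)
    ?_ ?_ ?_ ?_ ?_ ?_
  · refine eventually_nhdsWithin_of_eventually_nhds ?_
    filter_upwards [h1, h1n] with t ht htn
    have := ((hasDerivAt_const t (2 * g 0)).sub ht).sub (htn.comp t (hasDerivAt_neg t))
    exact this.congr_deriv (by ring)
  · exact Filter.Eventually.of_forall fun t => by simpa using hasDerivAt_pow 2 t
  · filter_upwards [self_mem_nhdsWithin] with t ht
    simpa using ht
  · refine tendsto_nhdsWithin_of_tendsto_nhds ?_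
    have := (tendsto_const_nhds (x := 2 * g 0)).sub hg0.tendsto |>.sub
      (hg0.tendsto.comp hneg)
    refine this.trans (by rw [show 2 * g 0 - g 0 - g 0 = 0 by ring])
  · refine tendsto_nhdsWithin_of_tendsto_nhds ?_
    have : Continuous fun t : ℝ => t ^ 2 := by fun_prop
    simpa using this.tendsto 0
  · have hn : HasDerivAt (fun t => - g' t + g' (-t)) (-g'' * 2) 0 := by
      have h2' : HasDerivAt g' g'' (-0) := by simpa using h2
      have := h2.neg.add (h2'.comp 0 (hasDerivAt_neg (0:ℝ)))
      exact this.congr_deriv (by ring)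
    have := (hasDerivAt_iff_tendsto_slope.1 hn).div_const 2
    rw [mul_div_cancel_right₀ _ (by norm_num : (2:ℝ) ≠ 0)] at this
    refine this.congr' ?_
    filter_upwards [self_mem_nhdsWithin] with t ht
    simp only [slope_def_field]
    have : t ≠ 0 := ht
    simp; field_simp

lemma lim_zero : Filter.Tendsto (fun t : ℝ => (2 * 1 - Real.sinc t - Real.sinc (-t)) / t ^ 2)
    (nhdsWithin 0 {0}ᶜ) (nhds (1 / 3)) := by
  rw [tendsto_iff_norm_sub_tendsto_zero]
  have hz : Filter.Tendsto (fun t : ℝ => t ^ 2 / 50) (nhdsWithin 0 {0}ᶜ) (nhds 0) := by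
    refine tendsto_nhdsWithin_of_tendsto_nhds ?_
    have : Continuous fun t : ℝ => t ^ 2 / 50 := by fun_prop
    simpa using this.tendsto 0
  refine squeeze_zero' (Filter.Eventually.of_forall fun t => norm_nonneg _) ?_ hz
  have hb : ∀ᶠ t : ℝ in nhds 0, |t| ≤ 1 := by
    have : Metric.ball (0:ℝ) 1 ∈ nhds (0:ℝ) := Metric.ball_mem_nhds _ one_pos
    filter_upwards [this] with t ht
    simp at ht; exact ht.le
  filter_upwards [self_mem_nhdsWithin, eventually_nhdsWithin_of_eventually_nhds hb] with t ht h1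
  have ht0 : t ≠ 0 := ht
  have hs := Real.sin_bound h1
  rw [Real.sinc_neg, Real.sinc_of_ne_zero ht0, Real.norm_eq_abs]
  have e : (2 * 1 - Real.sin t / t - Real.sin t / t) / t ^ 2 - 1 / 3
      = -(2 / t ^ 3) * (Real.sin t - (t - t ^ 3 / 6)) := by
    field_simp; ring
  rw [e, abs_mul, abs_neg, abs_div, abs_pow, abs_two]
  have hp : 0 < |t| := abs_pos.2 ht0
  calc 2 / |t| ^ 3 * |Real.sin t - (t - t ^ 3 / 6)| ≤ 2 / |t| ^ 3 * (|t| ^ 5 / 100) := by gcongr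
    _ = |t| ^ 2 / 50 := by field_simp; ring
    _ = t ^ 2 / 50 := by rw [sq_abs]

lemma lim_pos (s β : ℝ) (hs : 0 < s) :
    Filter.Tendsto (fun t : ℝ => (2 * Real.sinc (√(s ^ 2 + 2 * β * 0 + 0 ^ 2))
      - Real.sinc (√(s ^ 2 + 2 * β * t + t ^ 2))
      - Real.sinc (√(s ^ 2 + 2 * β * (-t) + (-t) ^ 2))) / t ^ 2)
    (nhdsWithin 0 {0}ᶜ) (nhds (-((β / s) ^ 2 *
      ((-(s ^ 2) * Real.sin s - 2 * s * Real.cos s + 2 * Real.sin s) / s ^ 3)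
      + (1 - (β / s) ^ 2) * (((s * Real.cos s - Real.sin s) / s ^ 2) / s)))) := by
  set N : ℝ → ℝ := fun t => √(s ^ 2 + 2 * β * t + t ^ 2) with hN
  have hN0 : N 0 = s := by simp [hN, Real.sqrt_sq hs.le]
  have hNc : Continuous N := by fun_prop
  have hNpos : ∀ᶠ t in nhds 0, 0 < N t :=
    hNc.continuousAt.eventually (lt_mem_nhds (by rw [hN0]; exact hs))
  have hND : ∀ t, 0 < N t → HasDerivAt N ((β + t) / N t) t := by
    intro t ht
    have hq : HasDerivAt (fun t => s ^ 2 + 2 * β * t + t ^ 2) (2 * β + 2 * t) t := by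
      have := (((hasDerivAt_id t).const_mul (2 * β)).const_add (s ^ 2)).add (hasDerivAt_pow 2 t)
      exact this.congr_deriv (by simp)
    have hne : s ^ 2 + 2 * β * t + t ^ 2 ≠ 0 := (Real.sqrt_pos.1 ht).ne'
    refine (hq.sqrt hne).congr_deriv ?_
    change (2 * β + 2 * t) / (2 * N t) = _
    field_simp
  refine second_diff (fun t => Real.sinc (N t))
    (fun t => (N t * Real.cos (N t) - Real.sin (N t)) / N t ^ 2 * ((β + t) / N t)) _ ?_ ?_
  · filter_upwards [hNpos.eventually_nhds] with t ht
    have ht' := ht.self_of_nhds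
    have := ((hND t ht').sin.div (hND t ht') ht'.ne')
    refine (this.congr_deriv ?_).congr_of_eventuallyEq ?_
    · field_simp
    · filter_upwards [ht] with r hr
      simp [Real.sinc_of_ne_zero hr.ne']
  · have hD := hND 0 (by rw [hN0]; exact hs)
    have h1 : HasDerivAt (fun t : ℝ => β + t) 1 0 := (hasDerivAt_id 0).const_add β
    have hne : N 0 ≠ 0 := by rw [hN0]; exact hs.ne'
    have := (((hD.mul hD.cos).sub hD.sin).div (hD.pow 2) (pow_ne_zero 2 hne)).mul (h1.div hD hne)
    refine this.congr_deriv ?_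
    simp only [Pi.sub_apply, Pi.mul_apply, Pi.div_apply, Pi.pow_apply, hN0]
    field_simp
    ring

lemma psd_diff (d : ℕ) (hd : d ≤ 3) (n : ℕ) (x : Fin n → EuclideanSpace ℝ (Fin d))
    (w : EuclideanSpace ℝ (Fin d)) (v : Fin n → ℝ) :
    0 ≤ ∑ i, ∑ j, v i * v j * (2 * Real.sinc ‖x i - x j‖ - Real.sinc ‖x i - x j + w‖
      - Real.sinc ‖x i - x j - w‖) := by
  have := psd_sinc d hd (Sum.elim x (fun i => x i + w)) (Sum.elim v (fun i => - v i))
  simp only [Fintype.sum_sum_type, Sum.elim_inl, Sum.elim_inr, ← Finset.sum_add_distrib] at this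
  refine this.trans_eq ?_
  refine Finset.sum_congr rfl fun i _ => Finset.sum_congr rfl fun j _ => ?_
  rw [show x i - (x j + w) = x i - x j - w by abel, show x i + w - x j = x i - x j + w by abel,
    show x i + w - (x j + w) = x i - x j by abel]
  ring

lemma norm_add_smul_unit {d : ℕ} (k u : EuclideanSpace ℝ (Fin d)) (hu : ‖u‖ = 1) (t : ℝ) :
    ‖k + t • u‖ = √(‖k‖ ^ 2 + 2 * ⟪k, u⟫ * t + t ^ 2) := by
  rw [← Real.sqrt_sq (norm_nonneg (k + t • u)), norm_add_sq_real, norm_smul, inner_smul_right, hu]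
  congr 1
  simp
  ring

lemma lim_main {d : ℕ} (k u : EuclideanSpace ℝ (Fin d)) (hu : ‖u‖ = 1) (L : ℝ)
    (h0 : k = 0 → L = 1 / 3)
    (hk : k ≠ 0 → L = -((⟪k, u⟫ / ‖k‖) ^ 2 *
      ((-(‖k‖ ^ 2) * Real.sin ‖k‖ - 2 * ‖k‖ * Real.cos ‖k‖ + 2 * Real.sin ‖k‖) / ‖k‖ ^ 3)
      + (1 - (⟪k, u⟫ / ‖k‖) ^ 2) * (((‖k‖ * Real.cos ‖k‖ - Real.sin ‖k‖) / ‖k‖ ^ 2) / ‖k‖))) :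
    Filter.Tendsto (fun t : ℝ => (2 * Real.sinc ‖k‖ - Real.sinc ‖k + t • u‖
      - Real.sinc ‖k - t • u‖) / t ^ 2) (nhdsWithin 0 {0}ᶜ) (nhds L) := by
  by_cases h : k = 0
  · rw [h0 h]
    refine lim_zero.congr fun t => ?_
    have : Real.sinc |t| = Real.sinc t := by
      rcases abs_choice t with h | h <;> rw [h]
      rw [Real.sinc_neg]
    simp [h, norm_smul, hu, this]
  · rw [hk h]
    refine (lim_pos ‖k‖ ⟪k, u⟫ (norm_pos_iff.2 h)).congr fun t => ?_
    rw [← norm_add_smul_unit k u hu, ← norm_add_smul_unit k u hu, ← norm_add_smul_unit k u hu]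
    simp [sub_eq_add_neg]

theorem statement_14 (d : ℕ) (hd1 : 1 ≤ d) (hd3 : d ≤ 3)
    (a₁ a₂ b₁ b₂ : ℝ) (ha₁ : 0 < a₁) (ha₂ : 0 < a₂) (hb₁ : 0 ≤ b₁) (hb₂ : 0 ≤ b₂)
    (u : EuclideanSpace ℝ (Fin d)) (hu : ‖u‖ = 1)
    (W W' W'' : ℝ → ℝ)
    (hW : ∀ t : ℝ, 0 < t → W t = Real.sin t / t) (hW0 : W 0 = 1)
    (hW' : ∀ t : ℝ, 0 < t → W' t = (t * Real.cos t - Real.sin t) / t ^ 2)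
    (hW'' : ∀ t : ℝ, 0 < t →
      W'' t = (-(t ^ 2) * Real.sin t - 2 * t * Real.cos t + 2 * Real.sin t) / t ^ 3)
    (hW''0 : W'' 0 = -(1 / 3))
    (T : EuclideanSpace ℝ (Fin d) → ℝ)
    (hT0 : T 0 = b₁ + b₂ / 3)
    (hT : ∀ h : EuclideanSpace ℝ (Fin d), h ≠ 0 →
      T h = b₁ * W (Real.sqrt a₁ * ‖h‖) -
        b₂ * (((⟪h, u⟫ : ℝ) / ‖h‖) ^ 2 * W'' (Real.sqrt a₂ * ‖h‖) +
          (1 - ((⟪h, u⟫ : ℝ) / ‖h‖) ^ 2) *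
            (W' (Real.sqrt a₂ * ‖h‖) / (Real.sqrt a₂ * ‖h‖)))) :
    IsStationaryCovariance d T := by
  have hWs : ∀ t : ℝ, 0 ≤ t → W t = Real.sinc t := by
    intro t ht
    rcases ht.eq_or_lt with h | h
    · rw [← h, hW0, Real.sinc_zero]
    · rw [hW t h, Real.sinc_of_ne_zero h.ne']
  have hc : 0 < √a₂ := Real.sqrt_pos.2 ha₂
  intro n x v
  set D : EuclideanSpace ℝ (Fin d) → ℝ := fun h => if h = 0 then 1 / 3 else
    -(((⟪h, u⟫ : ℝ) / ‖h‖) ^ 2 * W'' (Real.sqrt a₂ * ‖h‖) +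
          (1 - ((⟪h, u⟫ : ℝ) / ‖h‖) ^ 2) *
            (W' (Real.sqrt a₂ * ‖h‖) / (Real.sqrt a₂ * ‖h‖))) with hD
  have hTe : ∀ h, T h = b₁ * Real.sinc ‖√a₁ • h‖ + b₂ * D h := by
    intro h
    by_cases h0 : h = 0
    · subst h0
      rw [hT0]; simp [hD]; ring
    · rw [hT h h0, hWs _ (by positivity), norm_smul, Real.norm_of_nonneg (Real.sqrt_nonneg _)]
      simp only [hD, if_neg h0]
      ring
  have hlim : ∀ h, Filter.Tendsto (fun t : ℝ => (2 * Real.sinc ‖√a₂ • h‖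
      - Real.sinc ‖√a₂ • h + t • u‖ - Real.sinc ‖√a₂ • h - t • u‖) / t ^ 2)
      (nhdsWithin 0 {0}ᶜ) (nhds (D h)) := by
    intro h
    refine lim_main _ u hu _ ?_ ?_
    · intro h0
      have : h = 0 := by simpa [hc.ne'] using h0
      simp [hD, this]
    · intro h0
      have h1 : h ≠ 0 := by rintro rfl; simp at h0
      have hp : 0 < ‖h‖ := norm_pos_iff.2 h1
      have hp2 : 0 < √a₂ * ‖h‖ := by positivity
      simp only [hD, if_neg h1]
      rw [hW'' _ hp2, hW' _ hp2, norm_smul, Real.norm_of_nonneg hc.le, real_inner_smul_left,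
        mul_div_mul_left _ _ hc.ne']
  have hQ1 : 0 ≤ ∑ i, ∑ j, v i * v j * Real.sinc ‖√a₁ • (x i - x j)‖ := by
    simpa only [smul_sub] using psd_sinc d hd3 (fun i => √a₁ • x i) v
  have hQ2 : 0 ≤ ∑ i, ∑ j, v i * v j * D (x i - x j) := by
    have ht : Filter.Tendsto (fun t : ℝ => ∑ i, ∑ j, v i * v j *
        ((2 * Real.sinc ‖√a₂ • (x i - x j)‖ - Real.sinc ‖√a₂ • (x i - x j) + t • u‖
          - Real.sinc ‖√a₂ • (x i - x j) - t • u‖) / t ^ 2))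
        (nhdsWithin 0 {0}ᶜ) (nhds (∑ i, ∑ j, v i * v j * D (x i - x j))) :=
      tendsto_finsetSum _ fun i _ => tendsto_finsetSum _ fun j _ => (hlim _).const_mul _
    refine ge_of_tendsto' ht fun t => ?_
    have := psd_diff d hd3 n (fun i => √a₂ • x i) (t • u) v
    simp only [← mul_div_assoc, ← Finset.sum_div]
    refine div_nonneg ?_ (sq_nonneg t)
    simpa only [smul_sub] using this
  have he : ∑ i, ∑ j, v i * v j * T (x i - x j)
      = b₁ * ∑ i, ∑ j, v i * v j * Real.sinc ‖√a₁ • (x i - x j)‖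
        + b₂ * ∑ i, ∑ j, v i * v j * D (x i - x j) := by
    simp only [Finset.mul_sum, ← Finset.sum_add_distrib]
    refine Finset.sum_congr rfl fun i _ => Finset.sum_congr rfl fun j _ => ?_
    rw [hTe]; ring
  rw [he]
  positivity
end
end
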